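/- arXiv:2411.04070 — 5 statements merged into one kernel-verified Lean document; each statement's English description precedes it below -/
import Mathlib

section
/- Let κ be a (P,ρ)-kernel on a locally finite weakly ranked poset (P,ρ), with right and left KLS functions f and g, Z-function Z = g^rev·f, and augmented Chow functions F = ℋ·f^rev and G = g^rev·ℋ (where ℋ is the Chow function). Then: (i) if f is non-negative then F is non-negative, and if g is non-negative then G is non-negative; (ii) if Z is non-negative and unimodal and g is non-negative, then F is unimodal, and if Z is non-negative and unimodal and f is non-negative, then G is unimodal. -/
/-!
Since `f^rev = κ·f` and `f` is unitriangular, `κ(1) = δ`, so `κ = (x - 1) κ̄ + x δ`. Put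
`γ = g·κ̄` and `φ = κ̄·f`. Then `(x - 1) γ = g^rev - x g` and `(x - 1) φ = f^rev - x f`
(`left_reduced`, `right_reduced`). Both have diagonal `-1`, and because `deg g_{st} < ρ_{st}/2`,
non-negativity of `g` makes `γ_{st}`, for `s < t`, a non-negative combination of the blocks
`x^i + ⋯ + x^(ρ_{st}-i)`, that is, a non-negative symmetric unimodal polynomial with center
`ρ_{st}/2` (`exists_reduced`); the same holds for `φ` and `f`.

Multiplying by the Chow function gives `γ·ℋ = -g` and `ℋ·φ = -f`. Solved for the leading term,
these are positive recursions for `ℋ` (`mem_of_left_rec`, `mem_of_right_rec`), so `ℋ`, and hence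
`F` and `G`, are non-negative.

Since `Z = g^rev·f = g·f^rev`, the same identities give `γ·F = -Z` and `G·φ = -Z`, i.e.
`F_{st} = Z_{st} + Σ_{s<w≤t} γ_{sw} F_{wt}` and `G_{st} = Z_{st} + Σ_{s≤w<t} G_{sw} φ_{wt}`.
Here `Z_{st}` is symmetric with center `ρ_{st}/2`, and non-negative symmetric unimodal polynomials
are closed under products, and under sums with a common center (`symmUniCone_mul`), so unimodality
follows by induction on the rank.
-/

open Finset Polynomial
open scoped Classical

noncomputable section

variable {α : Type*}

/-- Convolution product in the incidence algebra of a locally finite poset over `ℤ[x]`.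
Only the values on intervals `s ≤ t` are relevant. -/
def conv [PartialOrder α] [LocallyFiniteOrder α] (a b : α → α → Polynomial ℤ) :
    α → α → Polynomial ℤ :=
  fun s t => ∑ w ∈ Finset.Icc s t, a s w * b w t

/-- The identity `δ` of the incidence algebra. -/
def dlt [PartialOrder α] : α → α → Polynomial ℤ :=
  fun s t => if s = t then 1 else 0

/-- The involution `a ↦ a^rev`, given by `(a^rev)_{st}(x) = x^{ρ_{st}} a_{st}(1/x)`. -/
def rev (ρ : α → α → ℕ) (a : α → α → Polynomial ℤ) : α → α → Polynomial ℤ :=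
  fun s t => (a s t).reflect (ρ s t)

/-- A weak rank function on a poset. -/
structure IsWeakRank [Preorder α] (ρ : α → α → ℕ) : Prop where
  pos : ∀ ⦃s t : α⦄, s < t → 0 < ρ s t
  add : ∀ ⦃s w t : α⦄, s ≤ w → w ≤ t → ρ s t = ρ s w + ρ w t

/-- `κ` is a `(P,ρ)`-kernel: it lies in `I_ρ(P)`, is `1` on the diagonal, and `κ⁻¹ = κ^rev`. -/
structure IsKernel [PartialOrder α] [LocallyFiniteOrder α] (ρ : α → α → ℕ)
    (κ : α → α → Polynomial ℤ) : Prop where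
  degLE : ∀ ⦃s t : α⦄, s ≤ t → (κ s t).natDegree ≤ ρ s t
  diag : ∀ s : α, κ s s = 1
  left : ∀ ⦃s t : α⦄, s ≤ t → conv (rev ρ κ) κ s t = dlt s t
  right : ∀ ⦃s t : α⦄, s ≤ t → conv κ (rev ρ κ) s t = dlt s t

/-- The reduced kernel `κ̄`: `κ̄_{st} = κ_{st}/(x-1)` for `s < t` and `κ̄_{ss} = -1`. -/
def red [PartialOrder α] (κ : α → α → Polynomial ℤ) : α → α → Polynomial ℤ :=
  fun s t => if s = t then -1 else κ s t /ₘ (X - 1)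

/-- `H` is the Chow function of `κ`, i.e. `H = -(κ̄)⁻¹`. -/
structure IsChow [PartialOrder α] [LocallyFiniteOrder α] (κ H : α → α → Polynomial ℤ) : Prop where
  left : ∀ ⦃s t : α⦄, s ≤ t → conv (red κ) H s t = -dlt s t
  right : ∀ ⦃s t : α⦄, s ≤ t → conv H (red κ) s t = -dlt s t

/-- `f` is the right KLS function of the kernel `κ`. -/
structure IsRightKLS [PartialOrder α] [LocallyFiniteOrder α] (ρ : α → α → ℕ)
    (κ f : α → α → Polynomial ℤ) : Prop where
  diag : ∀ s : α, f s s = 1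
  degLT : ∀ ⦃s t : α⦄, s < t → 2 * (f s t).natDegree < ρ s t
  rev_eq : ∀ ⦃s t : α⦄, s ≤ t → rev ρ f s t = conv κ f s t

/-- `g` is the left KLS function of the kernel `κ`. -/
structure IsLeftKLS [PartialOrder α] [LocallyFiniteOrder α] (ρ : α → α → ℕ)
    (κ g : α → α → Polynomial ℤ) : Prop where
  diag : ∀ s : α, g s s = 1
  degLT : ∀ ⦃s t : α⦄, s < t → 2 * (g s t).natDegree < ρ s t
  rev_eq : ∀ ⦃s t : α⦄, s ≤ t → rev ρ g s t = conv g κ s t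

/-- `p` is symmetric with center of symmetry `d/2`, i.e. `p(x) = x^d p(1/x)`. -/
def PolySymm (d : ℕ) (p : Polynomial ℤ) : Prop := p.natDegree ≤ d ∧ p.reflect d = p

/-- All coefficients of `p` are non-negative. -/
def PolyNonneg (p : Polynomial ℤ) : Prop := ∀ n, 0 ≤ p.coeff n

/-- The coefficient sequence of `p` is unimodal. -/
def PolyUnimodal (p : Polynomial ℤ) : Prop :=
  ∃ j, (∀ i < j, p.coeff i ≤ p.coeff (i + 1)) ∧ ∀ i, j ≤ i → p.coeff (i + 1) ≤ p.coeff i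

end

/-! ### Symmetric unimodal polynomials -/

/-- The cone of symmetric unimodal polynomials with non-negative coefficients and center `d/2`,
presented as the set of sums of the blocks `x^i + x^(i+1) + ⋯ + x^(d-i)`. -/
noncomputable def symmUniCone (d : ℕ) : AddSubmonoid (Polynomial ℤ) :=
  AddSubmonoid.closure {p | ∃ i n, 2 * i + n = d ∧ p = X ^ i * ∑ k ∈ range (n + 1), X ^ k}

lemma block_mem (i n : ℕ) :
    (X ^ i * ∑ k ∈ range (n + 1), X ^ k : Polynomial ℤ) ∈ symmUniCone (2 * i + n) :=
  AddSubmonoid.subset_closure ⟨i, n, rfl, rfl⟩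

lemma X_pow_mul_mem {d : ℕ} (i : ℕ) {p : Polynomial ℤ} (hp : p ∈ symmUniCone d) :
    X ^ i * p ∈ symmUniCone (2 * i + d) := by
  induction hp using AddSubmonoid.closure_induction with
  | mem p hp =>
    obtain ⟨j, n, rfl, rfl⟩ := hp
    rw [← mul_assoc, ← pow_add]
    convert block_mem (i + j) n using 2
    ring
  | zero => simp
  | add p q _ _ hp hq => rw [mul_add]; exact add_mem hp hq

/-- With `[n] = 1 + x + ⋯ + x^(n-1)`, this is `[n+1][m+1] = [n+m+1] + x [n][m]`, the identity
that decomposes a product of two blocks into blocks. -/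
lemma geom_mul_geom (n m : ℕ) :
    ((∑ k ∈ range (n + 1), X ^ k) * ∑ k ∈ range (m + 1), X ^ k : Polynomial ℤ) =
      (∑ k ∈ range (n + m + 1), X ^ k) +
        X * ((∑ k ∈ range n, X ^ k) * ∑ k ∈ range m, X ^ k) := by
  have h1 : (X - 1 : Polynomial ℤ) ≠ 0 := X_sub_C_ne_zero (1 : ℤ)
  apply mul_left_cancel₀ h1
  apply mul_left_cancel₀ h1
  have e (j : ℕ) : (X - 1 : Polynomial ℤ) * ∑ k ∈ range j, X ^ k = X ^ j - 1 :=
    mul_geom_sum X j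
  have e1 := e (n + 1)
  have e2 := e (m + 1)
  have e3 := e (n + m + 1)
  have e4 := e n
  have e5 := e m
  calc _ = ((X - 1 : Polynomial ℤ) * ∑ k ∈ range (n + 1), X ^ k) *
        ((X - 1 : Polynomial ℤ) * ∑ k ∈ range (m + 1), X ^ k) := by ring
    _ = (X - 1) * ((X - 1 : Polynomial ℤ) * ∑ k ∈ range (n + m + 1), X ^ k) +
        X * (((X - 1 : Polynomial ℤ) * ∑ k ∈ range n, X ^ k) *
        ((X - 1 : Polynomial ℤ) * ∑ k ∈ range m, X ^ k)) := by
          rw [e1, e2, e3, e4, e5]; ring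
    _ = _ := by ring

lemma geom_mul_geom_mem (n m : ℕ) :
    ((∑ k ∈ range (n + 1), X ^ k) * ∑ k ∈ range (m + 1), X ^ k : Polynomial ℤ) ∈
      symmUniCone (n + m) := by
  induction n generalizing m with
  | zero => simpa using block_mem 0 m
  | succ n ih =>
    cases m with
    | zero => simpa using block_mem 0 (n + 1)
    | succ m =>
      rw [geom_mul_geom]
      refine add_mem (by simpa using block_mem 0 (n + 1 + (m + 1))) ?_
      have := X_pow_mul_mem 1 (ih m)
      rw [pow_one] at this
      convert this using 1
      ring_nf

lemma symmUniCone_mul {d e : ℕ} {p q : Polynomial ℤ}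
    (hp : p ∈ symmUniCone d) (hq : q ∈ symmUniCone e) : p * q ∈ symmUniCone (d + e) := by
  induction hp using AddSubmonoid.closure_induction with
  | zero => simp
  | add p p' _ _ hp hp' => rw [add_mul]; exact add_mem hp hp'
  | mem p hp =>
    obtain ⟨i, n, rfl, rfl⟩ := hp
    induction hq using AddSubmonoid.closure_induction with
    | zero => simp
    | add p p' _ _ hp hp' => rw [mul_add]; exact add_mem hp hp'
    | mem q hq =>
      obtain ⟨j, m, rfl, rfl⟩ := hq
      have := X_pow_mul_mem (i + j) (geom_mul_geom_mem n m)
      convert this using 1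
      · ring_nf
      · ring

lemma coeff_block (i n k : ℕ) :
    (X ^ i * ∑ k ∈ range (n + 1), X ^ k : Polynomial ℤ).coeff k =
      if i ≤ k ∧ k ≤ i + n then 1 else 0 := by
  rw [coeff_X_pow_mul', finsetSum_coeff]
  simp only [coeff_X_pow, Finset.sum_ite_eq, Finset.mem_range]
  split_ifs <;> first | rfl | omega

/-- The additive monoid of polynomials with non-negative coefficients. -/
def nonnegCone : AddSubmonoid (Polynomial ℤ) where
  carrier := {p | PolyNonneg p}
  zero_mem' := fun n => by simp
  add_mem' := fun ha hb n => by
    rw [coeff_add]; exact add_nonneg (ha n) (hb n)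

lemma nonnegCone_mul {p q : Polynomial ℤ} (hp : p ∈ nonnegCone) (hq : q ∈ nonnegCone) :
    p * q ∈ nonnegCone := fun n => by
  rw [coeff_mul]
  exact Finset.sum_nonneg fun x _ => mul_nonneg (hp _) (hq _)

lemma symmUniCone_le_nonnegCone (d : ℕ) : symmUniCone d ≤ nonnegCone := by
  refine AddSubmonoid.closure_le.2 ?_
  rintro _ ⟨i, n, rfl, rfl⟩ k
  rw [coeff_block]
  split_ifs <;> simp

lemma polyUnimodal_of_mem {d : ℕ} {p : Polynomial ℤ} (hp : p ∈ symmUniCone d) :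
    PolyUnimodal p := by
  refine ⟨d / 2, ?_⟩
  induction hp using AddSubmonoid.closure_induction with
  | zero => simp
  | add p q _ _ hp hq =>
    simp only [coeff_add]
    exact ⟨fun i hi => add_le_add (hp.1 i hi) (hq.1 i hi),
      fun i hi => add_le_add (hp.2 i hi) (hq.2 i hi)⟩
  | mem p hp =>
    obtain ⟨i, n, rfl, rfl⟩ := hp
    simp only [coeff_block]
    constructor <;> intro k hk <;> split_ifs <;> omega

/-- A polynomial whose coefficients are symmetric about `d/2`, non-negative at `0` and weakly
increasing up to the middle lies in the cone: subtract `p_0 (1 + x + ⋯ + x^d)`, divide by `x`. -/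
lemma mem_of_coeff (d : ℕ) (p : Polynomial ℤ) (h0 : ∀ k, d < k → p.coeff k = 0)
    (hs : ∀ k, k ≤ d → p.coeff k = p.coeff (d - k)) (hp : 0 ≤ p.coeff 0)
    (hi : ∀ i, 2 * i + 2 ≤ d → p.coeff i ≤ p.coeff (i + 1)) : p ∈ symmUniCone d := by
  induction d using Nat.strong_induction_on generalizing p with
  | _ d ih =>
  obtain ⟨c, hc⟩ := Int.eq_ofNat_of_zero_le hp
  have hb : (c • ∑ k ∈ range (d + 1), X ^ k : Polynomial ℤ) ∈ symmUniCone d :=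
    nsmul_mem (by simpa using block_mem 0 d) c
  have cb (k : ℕ) : (c • ∑ k ∈ range (d + 1), X ^ k : Polynomial ℤ).coeff k =
      if k ≤ d then p.coeff 0 else 0 := by
    have := coeff_block 0 d k
    simp only [pow_zero, one_mul, zero_le, true_and, zero_add] at this
    rw [coeff_smul, this, hc]
    simp
  rcases lt_or_ge d 2 with hd | hd
  · convert hb
    ext k
    rw [cb]
    split_ifs with h
    · have : k = 0 ∨ d - k = 0 := by omega
      rcases this with rfl | h'
      · rfl
      · rw [hs k h, h']
    · exact h0 k (by omega)
  · have hq : (p - c • ∑ k ∈ range (d + 1), X ^ k).divX ∈ symmUniCone (d - 2) := by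
      have cq (k : ℕ) : (p - c • ∑ k ∈ range (d + 1), X ^ k).divX.coeff k =
          p.coeff (k + 1) - if k + 1 ≤ d then p.coeff 0 else 0 := by
        rw [coeff_divX, coeff_sub, cb]
      apply ih (d - 2) (by omega)
      · intro k hk
        rw [cq]
        split_ifs with h
        · have : k + 1 = d := by omega
          rw [this, hs d le_rfl]; simp
        · rw [h0 _ (by omega)]; simp
      · intro k hk
        rw [cq, cq, if_pos (by omega), if_pos (by omega), hs (k + 1) (by omega)]
        congr 2
        omega
      · rw [cq, if_pos (by omega)]
        have := hi 0 (by omega)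
        simpa using this
      · intro i hi'
        rw [cq, cq, if_pos (by omega), if_pos (by omega)]
        have := hi (i + 1) (by omega)
        linarith
    have := X_pow_mul_mem 1 hq
    rw [show 2 * 1 + (d - 2) = d by omega, pow_one] at this
    have key : p = c • ∑ k ∈ range (d + 1), X ^ k +
        X * (p - c • ∑ k ∈ range (d + 1), X ^ k).divX := by
      have h := X_mul_divX_add (p - c • ∑ k ∈ range (d + 1), X ^ k)
      have hz : (p - c • ∑ k ∈ range (d + 1), X ^ k).coeff 0 = 0 := by
        rw [coeff_sub, cb]; simp
      rw [hz, C_0, add_zero] at h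
      rw [h]; ring
    rw [key]
    exact add_mem hb this

lemma mem_of_unimodal {d : ℕ} {p : Polynomial ℤ} (hs : PolySymm d p) (hn : PolyNonneg p)
    (hu : PolyUnimodal p) : p ∈ symmUniCone d := by
  have hs' (k : ℕ) (hk : k ≤ d) : p.coeff k = p.coeff (d - k) := by
    conv_lhs => rw [← hs.2]
    rw [coeff_reflect, revAt_le hk]
  refine mem_of_coeff d p (fun k hk => coeff_eq_zero_of_natDegree_lt (hs.1.trans_lt hk)) hs'
    (hn 0) fun i hi => ?_
  obtain ⟨j, hj1, hj2⟩ := hu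
  rcases lt_or_ge i j with h | h
  · exact hj1 i h
  -- Past the mode the sequence decreases, and `p_i = p_(d-i)` comes after `p_(i+1)`.
  · have anti (k : ℕ) (hk : i + 1 ≤ k) : p.coeff k ≤ p.coeff (i + 1) := by
      induction k, hk using Nat.le_induction with
      | base => rfl
      | succ k hk ih => exact (hj2 k (by omega)).trans ih
    rw [hs' i (by omega)]
    exact anti _ (by omega)

/-- If `p` is non-negative of degree below `d/2`, then `(x^d p(1/x) - x p(x)) / (x - 1)` is a
sum of blocks: `x^i` contributes `x^(i+1) + ⋯ + x^(d-i-1)`. -/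
lemma exists_reduced {d : ℕ} {p : Polynomial ℤ} (hd : 2 * p.natDegree < d) (hp : PolyNonneg p) :
    ∃ q ∈ symmUniCone d, (X - 1) * q = p.reflect d - X * p := by
  have aux (m : ℕ) (hm : 2 * m ≤ d + 1) : ∃ q ∈ symmUniCone d, (X - 1) * q =
      (∑ i ∈ range m, C (p.coeff i) * X ^ i).reflect d -
        X * ∑ i ∈ range m, C (p.coeff i) * X ^ i := by
    induction m with
    | zero => exact ⟨0, zero_mem _, by simp⟩
    | succ m ih =>
      obtain ⟨q, hq, hq'⟩ := ih (by omega)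
      obtain ⟨c, hc⟩ := Int.eq_ofNat_of_zero_le (hp m)
      refine ⟨q + c • (X ^ (m + 1) * ∑ k ∈ range (d - 2 * m - 1), X ^ k),
        add_mem hq (nsmul_mem ?_ c), ?_⟩
      · rcases Nat.eq_zero_or_pos (d - 2 * m - 1) with h | h
        · simp [h]
        · have := block_mem (m + 1) (d - 2 * m - 2)
          rwa [show 2 * (m + 1) + (d - 2 * m - 2) = d by omega,
            show d - 2 * m - 2 + 1 = d - 2 * m - 1 by omega] at this
      · rw [Finset.sum_range_succ, reflect_add, reflect_C_mul_X_pow, revAt_le (by omega),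
          mul_add, hq', hc, nsmul_eq_mul]
        have e := mul_geom_sum (X : Polynomial ℤ) (d - 2 * m - 1)
        have e' : (X : Polynomial ℤ) ^ (d - m) = X ^ (m + 1) * X ^ (d - 2 * m - 1) := by
          rw [← pow_add]; congr 1; omega
        rw [e']
        have hC : (C ((c : ℕ) : ℤ) : Polynomial ℤ) = (c : Polynomial ℤ) := by simp
        rw [hC]
        linear_combination (c : Polynomial ℤ) * X ^ (m + 1) * e
  obtain ⟨q, hq, h⟩ := aux (p.natDegree + 1) (by omega)
  rw [← as_sum_range_C_mul_X_pow p] at h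
  exact ⟨q, hq, h⟩

/-! ### The incidence algebra -/

section Incidence

variable {α : Type*} [PartialOrder α] [LocallyFiniteOrder α]

lemma conv_congr {a a' b b' : α → α → Polynomial ℤ} {s t : α}
    (ha : ∀ w, s ≤ w → w ≤ t → a s w = a' s w) (hb : ∀ w, s ≤ w → w ≤ t → b w t = b' w t) :
    conv a b s t = conv a' b' s t := by
  refine Finset.sum_congr rfl fun w hw => ?_
  obtain ⟨h1, h2⟩ := Finset.mem_Icc.1 hw
  rw [ha w h1 h2, hb w h1 h2]

lemma conv_assoc (a b c : α → α → Polynomial ℤ) (s t : α) :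
    conv (conv a b) c s t = conv a (conv b c) s t := by
  simp only [conv, Finset.sum_mul, Finset.mul_sum]
  rw [Finset.sum_comm' (t' := Icc s t) (s' := fun v => Icc v t)]
  · simp only [mul_assoc]
  · intro w v
    simp only [Finset.mem_Icc]
    constructor
    · rintro ⟨⟨h1, h2⟩, h3, h4⟩
      exact ⟨⟨h4, h2⟩, h3, h4.trans h2⟩
    · rintro ⟨⟨h1, h2⟩, h3, h4⟩
      exact ⟨⟨h3.trans h1, h2⟩, h3, h1⟩

lemma conv_dlt (a : α → α → Polynomial ℤ) {s t : α} (h : s ≤ t) : conv a dlt s t = a s t := by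
  simp [conv, dlt, h]

lemma dlt_conv (a : α → α → Polynomial ℤ) {s t : α} (h : s ≤ t) : conv dlt a s t = a s t := by
  simp [conv, dlt, h]

lemma conv_neg (a b : α → α → Polynomial ℤ) (s t : α) :
    conv a (fun s t => -b s t) s t = -conv a b s t := by
  simp [conv]

lemma neg_conv (a b : α → α → Polynomial ℤ) (s t : α) :
    conv (fun s t => -a s t) b s t = -conv a b s t := by
  simp [conv]

/-- If `γ_{ss} = -1` and `γ·A = -B`, then `A_{st} = B_{st} + Σ_{s<w≤t} γ_{sw} A_{wt}`; hence `A`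
lies in any multiplicative family of cones containing `B` and the off-diagonal part of `γ`. -/
lemma mem_of_left_rec {ρ : α → α → ℕ} (hρ : IsWeakRank ρ) (S : ℕ → AddSubmonoid (Polynomial ℤ))
    (hS : ∀ {d e p q}, p ∈ S d → q ∈ S e → p * q ∈ S (d + e)) {γ A B : α → α → Polynomial ℤ}
    (hd : ∀ s, γ s s = -1) (hγ : ∀ s t, s < t → γ s t ∈ S (ρ s t))
    (hB : ∀ s t, s ≤ t → B s t ∈ S (ρ s t)) (h : ∀ s t, s ≤ t → conv γ A s t = -B s t)
    (s t : α) (hst : s ≤ t) : A s t ∈ S (ρ s t) := by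
  induction hn : ρ s t using Nat.strong_induction_on generalizing s with
  | _ n ih =>
  subst hn
  have e := h s t hst
  rw [conv, ← Finset.Ioc_insert_left hst, Finset.sum_insert (by simp), hd] at e
  have : A s t = B s t + ∑ w ∈ Ioc s t, γ s w * A w t := by linear_combination -e
  rw [this]
  refine add_mem (hB s t hst) (sum_mem fun w hw => ?_)
  obtain ⟨h1, h2⟩ := Finset.mem_Ioc.1 hw
  have r := hρ.add h1.le h2
  have := hρ.pos h1
  rw [r]
  exact hS (hγ s w h1) (ih _ (by omega) w h2 rfl)

/-- The mirror image of `mem_of_left_rec`, for `A·φ = -B`. -/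
lemma mem_of_right_rec {ρ : α → α → ℕ} (hρ : IsWeakRank ρ) (S : ℕ → AddSubmonoid (Polynomial ℤ))
    (hS : ∀ {d e p q}, p ∈ S d → q ∈ S e → p * q ∈ S (d + e)) {φ A B : α → α → Polynomial ℤ}
    (hd : ∀ s, φ s s = -1) (hφ : ∀ s t, s < t → φ s t ∈ S (ρ s t))
    (hB : ∀ s t, s ≤ t → B s t ∈ S (ρ s t)) (h : ∀ s t, s ≤ t → conv A φ s t = -B s t)
    (s t : α) (hst : s ≤ t) : A s t ∈ S (ρ s t) := by
  induction hn : ρ s t using Nat.strong_induction_on generalizing t with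
  | _ n ih =>
  subst hn
  have e := h s t hst
  rw [conv, ← Finset.Ico_insert_right hst, Finset.sum_insert (by simp), hd] at e
  have : A s t = B s t + ∑ w ∈ Ico s t, A s w * φ w t := by linear_combination -e
  rw [this]
  refine add_mem (hB s t hst) (sum_mem fun w hw => ?_)
  obtain ⟨h1, h2⟩ := Finset.mem_Ico.1 hw
  have r := hρ.add h1 h2.le
  have := hρ.pos h2
  rw [r]
  exact hS (ih _ (by omega) w h1 rfl) (hφ w t h2)

lemma eval_one_reflect {N : ℕ} {p : Polynomial ℤ} (h : p.natDegree ≤ N) :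
    (p.reflect N).eval 1 = p.eval 1 := by
  let : Invertible (1 : ℤ) := invertibleOne
  have := eval₂_reflect_mul_pow (RingHom.id ℤ) 1 N p h
  simpa [eval₂_id] using this

/-- `κ(1) = δ`, because `f^rev = κ·f` specializes at `x = 1` to `f(1) = κ(1)·f(1)` and `f` is
unitriangular. -/
lemma kernel_eval_one {ρ : α → α → ℕ} (hρ : IsWeakRank ρ) {κ f : α → α → Polynomial ℤ}
    (hκ : IsKernel ρ κ) (hf : IsRightKLS ρ κ f) (s t : α) (hst : s < t) :
    (κ s t).eval 1 = 0 := by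
  induction hn : ρ s t using Nat.strong_induction_on generalizing t with
  | _ n ih =>
  subst hn
  have e := congrArg (eval 1) (hf.rev_eq hst.le)
  rw [rev, eval_one_reflect (by have := hf.degLT hst; omega), conv,
    ← Finset.Ioc_insert_left hst.le, Finset.sum_insert (by simp), hκ.diag, one_mul, eval_add,
    eval_finsetSum, Finset.sum_eq_single_of_mem t (by simp [hst])] at e
  · rw [hf.diag, mul_one] at e
    linarith
  · intro w hw hwt
    obtain ⟨h1, h2⟩ := Finset.mem_Ioc.1 hw
    have h3 := lt_of_le_of_ne h2 hwt
    have r := hρ.add h1.le h2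
    have := hρ.pos h3
    rw [eval_mul, ih _ (by omega) w h1 rfl, zero_mul]

lemma kernel_eq {ρ : α → α → ℕ} (hρ : IsWeakRank ρ) {κ f : α → α → Polynomial ℤ}
    (hκ : IsKernel ρ κ) (hf : IsRightKLS ρ κ f) (s t : α) (hst : s ≤ t) :
    κ s t = (X - 1) * red κ s t + X * dlt s t := by
  rcases hst.eq_or_lt with rfl | h
  · simp [red, dlt, hκ.diag]
  · have := mul_divByMonic_eq_iff_isRoot.2 (kernel_eval_one hρ hκ hf s t h)
    rw [C_1] at this
    simp [red, dlt, h.ne, this]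

variable {ρ : α → α → ℕ} {κ f g H : α → α → Polynomial ℤ}

/-- `(x - 1) (g·κ̄) = g^rev - x g`. -/
lemma left_reduced (hρ : IsWeakRank ρ) (hκ : IsKernel ρ κ) (hf : IsRightKLS ρ κ f)
    (hg : IsLeftKLS ρ κ g) (s t : α) (hst : s ≤ t) :
    (X - 1) * conv g (red κ) s t = (g s t).reflect (ρ s t) - X * g s t := by
  have e := hg.rev_eq hst
  have e2 : conv g κ s t = conv g (fun s t => (X - 1) * red κ s t + X * dlt s t) s t :=
    conv_congr (fun _ _ _ => rfl) fun w _ h => kernel_eq hρ hκ hf w t h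
  have e3 : conv g (fun s t => (X - 1) * red κ s t + X * dlt s t) s t =
      (X - 1) * conv g (red κ) s t + X * conv g dlt s t := by
    simp only [conv, Finset.mul_sum, ← Finset.sum_add_distrib]
    exact Finset.sum_congr rfl fun w _ => by ring
  rw [e2, e3, conv_dlt g hst, rev] at e
  linear_combination -e

/-- `(x - 1) (κ̄·f) = f^rev - x f`. -/
lemma right_reduced (hρ : IsWeakRank ρ) (hκ : IsKernel ρ κ) (hf : IsRightKLS ρ κ f)
    (s t : α) (hst : s ≤ t) :
    (X - 1) * conv (red κ) f s t = (f s t).reflect (ρ s t) - X * f s t := by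
  have e := hf.rev_eq hst
  have e2 : conv κ f s t = conv (fun s t => (X - 1) * red κ s t + X * dlt s t) f s t :=
    conv_congr (fun w h _ => kernel_eq hρ hκ hf s w h) fun _ _ _ => rfl
  have e3 : conv (fun s t => (X - 1) * red κ s t + X * dlt s t) f s t =
      (X - 1) * conv (red κ) f s t + X * conv dlt f s t := by
    simp only [conv, Finset.mul_sum, ← Finset.sum_add_distrib]
    exact Finset.sum_congr rfl fun w _ => by ring
  rw [e2, e3, dlt_conv f hst, rev] at e
  linear_combination -e

lemma left_reduced_mem (hρ : IsWeakRank ρ) (hκ : IsKernel ρ κ) (hf : IsRightKLS ρ κ f)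
    (hg : IsLeftKLS ρ κ g) (hn : ∀ s t : α, s ≤ t → PolyNonneg (g s t)) (s t : α) (hst : s < t) :
    conv g (red κ) s t ∈ symmUniCone (ρ s t) := by
  obtain ⟨q, hq, h⟩ := exists_reduced (hg.degLT hst) (hn s t hst.le)
  rw [← left_reduced hρ hκ hf hg s t hst.le] at h
  rwa [← mul_left_cancel₀ (X_sub_C_ne_zero (1 : ℤ)) h]

lemma right_reduced_mem (hρ : IsWeakRank ρ) (hκ : IsKernel ρ κ) (hf : IsRightKLS ρ κ f)
    (hn : ∀ s t : α, s ≤ t → PolyNonneg (f s t)) (s t : α) (hst : s < t) :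
    conv (red κ) f s t ∈ symmUniCone (ρ s t) := by
  obtain ⟨q, hq, h⟩ := exists_reduced (hf.degLT hst) (hn s t hst.le)
  rw [← right_reduced hρ hκ hf s t hst.le] at h
  rwa [← mul_left_cancel₀ (X_sub_C_ne_zero (1 : ℤ)) h]

/-- `(g·κ̄)·ℋ = -g`. -/
lemma left_reduced_conv (hH : IsChow κ H) (s t : α) (hst : s ≤ t) :
    conv (conv g (red κ)) H s t = -g s t := by
  rw [conv_assoc, conv_congr (a' := g) (b' := fun s t => -dlt s t) (fun _ _ _ => rfl)
    fun w _ h => hH.left h, conv_neg, conv_dlt g hst]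

/-- `ℋ·(κ̄·f) = -f`. -/
lemma conv_right_reduced (hH : IsChow κ H) (s t : α) (hst : s ≤ t) :
    conv H (conv (red κ) f) s t = -f s t := by
  rw [← conv_assoc, conv_congr (b' := f) (a' := fun s t => -dlt s t)
    (fun w h _ => hH.right h) fun _ _ _ => rfl, neg_conv, dlt_conv f hst]

/-- `Z = g^rev·f = g·κ·f = g·f^rev`. -/
lemma Z_eq (hf : IsRightKLS ρ κ f) (hg : IsLeftKLS ρ κ g) (s t : α) :
    conv g (rev ρ f) s t = conv (rev ρ g) f s t := by
  rw [conv_congr (a' := g) (b' := conv κ f) (fun _ _ _ => rfl) fun w _ h => hf.rev_eq h,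
    ← conv_assoc]
  exact conv_congr (fun w h _ => (hg.rev_eq h).symm) fun _ _ _ => rfl

lemma natDegree_right (hf : IsRightKLS ρ κ f) {s t : α} (h : s ≤ t) :
    (f s t).natDegree ≤ ρ s t := by
  rcases h.eq_or_lt with rfl | h
  · simp [hf.diag]
  · have := hf.degLT h
    omega

lemma natDegree_left (hg : IsLeftKLS ρ κ g) {s t : α} (h : s ≤ t) :
    (g s t).natDegree ≤ ρ s t := by
  rcases h.eq_or_lt with rfl | h
  · simp [hg.diag]
  · have := hg.degLT h
    omega

lemma natDegree_reflect_le' {N : ℕ} {p : Polynomial ℤ} (h : p.natDegree ≤ N) :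
    (p.reflect N).natDegree ≤ N := by
  rw [natDegree_le_iff_coeff_eq_zero]
  intro k hk
  rw [coeff_reflect, revAt_eq_self_of_lt hk]
  exact coeff_eq_zero_of_natDegree_lt (h.trans_lt hk)

lemma Z_symm (hρ : IsWeakRank ρ) (hf : IsRightKLS ρ κ f) (hg : IsLeftKLS ρ κ g) (s t : α) :
    PolySymm (ρ s t) (conv (rev ρ g) f s t) := by
  constructor
  · refine natDegree_sum_le_of_forall_le _ _ fun w hw => ?_
    obtain ⟨h1, h2⟩ := Finset.mem_Icc.1 hw
    rw [hρ.add h1 h2]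
    exact natDegree_mul_le.trans (add_le_add (natDegree_reflect_le' (natDegree_left hg h1))
      (natDegree_right hf h2))
  · have hsum (S : Finset α) (N : ℕ) (F : α → Polynomial ℤ) :
        (∑ w ∈ S, F w).reflect N = ∑ w ∈ S, (F w).reflect N := by
      induction S using Finset.induction_on with
      | empty => simp
      | insert a S ha ih => rw [Finset.sum_insert ha, Finset.sum_insert ha, reflect_add, ih]
    calc _ = (conv g (rev ρ f) s t).reflect (ρ s t) := by rw [Z_eq hf hg]
      _ = conv (rev ρ g) f s t := ?_
    rw [conv, conv, hsum]
    refine Finset.sum_congr rfl fun w hw => ?_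
    obtain ⟨h1, h2⟩ := Finset.mem_Icc.1 hw
    rw [hρ.add h1 h2, rev, rev, reflect_mul _ _ (natDegree_left hg h1)
      (natDegree_reflect_le' (natDegree_right hf h2))]
    congr 1
    ext k
    simp

lemma Z_mem (hρ : IsWeakRank ρ) (hf : IsRightKLS ρ κ f) (hg : IsLeftKLS ρ κ g)
    (hZ : ∀ s t : α, s ≤ t →
        PolyNonneg (conv (rev ρ g) f s t) ∧ PolyUnimodal (conv (rev ρ g) f s t))
    (s t : α) (hst : s ≤ t) : conv (rev ρ g) f s t ∈ symmUniCone (ρ s t) :=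
  mem_of_unimodal (Z_symm hρ hf hg s t) (hZ s t hst).1 (hZ s t hst).2

lemma PolyNonneg.reflect {p : Polynomial ℤ} (h : PolyNonneg p) (N : ℕ) :
    PolyNonneg (p.reflect N) := fun n => by
  rw [coeff_reflect]; exact h _

lemma polyNonneg_conv {a b : α → α → Polynomial ℤ}
    (ha : ∀ s t : α, s ≤ t → PolyNonneg (a s t)) (hb : ∀ s t : α, s ≤ t → PolyNonneg (b s t))
    (s t : α) : PolyNonneg (conv a b s t) :=
  sum_mem (S := nonnegCone) fun w hw =>
    nonnegCone_mul (ha s w (Finset.mem_Icc.1 hw).1) (hb w t (Finset.mem_Icc.1 hw).2)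

end Incidence

/-- Theorem 3.17: (i) if `f` (resp. `g`) is non-negative then the right (resp. left) augmented
Chow function `F = ℋ·f^rev` (resp. `G = g^rev·ℋ`) is non-negative; (ii) if the `Z`-function
`Z = g^rev·f` is non-negative and unimodal and `g` (resp. `f`) is non-negative, then `F`
(resp. `G`) is unimodal. -/
theorem augmented_chow_nonneg_unimodal [PartialOrder α] [LocallyFiniteOrder α]
    (ρ : α → α → ℕ) (hρ : IsWeakRank ρ)
    (κ : α → α → Polynomial ℤ) (hκ : IsKernel ρ κ)
    (H : α → α → Polynomial ℤ) (hH : IsChow κ H)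
    (f : α → α → Polynomial ℤ) (hf : IsRightKLS ρ κ f)
    (g : α → α → Polynomial ℤ) (hg : IsLeftKLS ρ κ g) :
    ((∀ s t : α, s ≤ t → PolyNonneg (f s t)) →
      ∀ s t : α, s ≤ t → PolyNonneg (conv H (rev ρ f) s t)) ∧
    ((∀ s t : α, s ≤ t → PolyNonneg (g s t)) →
      ∀ s t : α, s ≤ t → PolyNonneg (conv (rev ρ g) H s t)) ∧
    ((∀ s t : α, s ≤ t →
        PolyNonneg (conv (rev ρ g) f s t) ∧ PolyUnimodal (conv (rev ρ g) f s t)) →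
      (∀ s t : α, s ≤ t → PolyNonneg (g s t)) →
      ∀ s t : α, s ≤ t → PolyUnimodal (conv H (rev ρ f) s t)) ∧
    ((∀ s t : α, s ≤ t →
        PolyNonneg (conv (rev ρ g) f s t) ∧ PolyUnimodal (conv (rev ρ g) f s t)) →
      (∀ s t : α, s ≤ t → PolyNonneg (f s t)) →
      ∀ s t : α, s ≤ t → PolyUnimodal (conv (rev ρ g) H s t)) := by
  have hγd (s : α) : conv g (red κ) s s = -1 := by simp [conv, hg.diag, red]
  have hφd (s : α) : conv (red κ) f s s = -1 := by simp [conv, hf.diag, red]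
  refine ⟨fun hn s t _ => ?_, fun hn s t _ => ?_, fun hZ hn s t hst => ?_,
    fun hZ hn s t hst => ?_⟩
  · have hHn := mem_of_right_rec hρ (fun _ => nonnegCone) nonnegCone_mul hφd
      (fun s t h => symmUniCone_le_nonnegCone _ (right_reduced_mem hρ hκ hf hn s t h)) hn
      (conv_right_reduced hH)
    exact polyNonneg_conv hHn (fun s t h => (hn s t h).reflect _) s t
  · have hHn := mem_of_left_rec hρ (fun _ => nonnegCone) nonnegCone_mul hγd
      (fun s t h => symmUniCone_le_nonnegCone _ (left_reduced_mem hρ hκ hf hg hn s t h)) hn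
      (left_reduced_conv hH)
    exact polyNonneg_conv (fun s t h => (hn s t h).reflect _) hHn s t
  · refine polyUnimodal_of_mem (mem_of_left_rec hρ symmUniCone symmUniCone_mul hγd
      (left_reduced_mem hρ hκ hf hg hn) (Z_mem hρ hf hg hZ) (fun s t _ => ?_) s t hst)
    rw [← conv_assoc, conv_congr (a' := fun s t => -g s t) (b' := rev ρ f)
      (fun w h _ => left_reduced_conv hH s w h) fun _ _ _ => rfl, neg_conv, Z_eq hf hg]
  · refine polyUnimodal_of_mem (mem_of_right_rec hρ symmUniCone symmUniCone_mul hφd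
      (right_reduced_mem hρ hκ hf hn) (Z_mem hρ hf hg hZ) (fun s t _ => ?_) s t hst)
    rw [conv_assoc, conv_congr (a' := rev ρ g) (b' := fun s t => -f s t)
      (fun _ _ _ => rfl) fun w _ h => conv_right_reduced hH w t h, conv_neg]
end

section
/- Let P be a finite graded bounded poset. The χ-Chow polynomial of P is given by the chain expansion ℋ_P(x) = Σ over all chains 0̂ = p_0 < p_1 < ⋯ < p_m ≤ 1̂ (m ≥ 0) of the product Π_{i=1}^{m} x·(x^{ρ(p_i) − ρ(p_{i−1}) − 1} − 1)/(x − 1). -/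
/-!
Multiplying the defining relation `χ̄ · ℋ = -δ` on the left by `ζ` gives `(ζ · χ̄) · ℋ = -ζ`.
Since `χ = μ · ζ^rev`, one has `ζ · χ = ζ^rev`, and `(x - 1) χ̄ = χ` off the diagonal because
`χ_{st}(1) = 0` for `s < t`.  Hence `ζ · χ̄` is `-1` on the diagonal and
`φ_{st} = (x^{ρ_{st}} - x)/(x - 1) = x (1 + ⋯ + x^{ρ_{st} - 2})` for `s < t`
(`sum_red_chi`), which yields the recursion
`ℋ_{s1̂} = 1 + Σ_{s < w ≤ 1̂} φ_{sw} ℋ_{w1̂}` (`chow_recursion`).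
The weighted sum over chains starting at `s` obeys the same recursion, by splitting a chain of
positive length at its second element (`chainSum_succ`), and chains have fewer than `|P|` steps
(`chainSum_eq_zero`).  Downward induction on `s` identifies the two.
-/

open Finset Polynomial
open scoped Classical

noncomputable section

variable {α : Type*}

/-- `mu` is the Möbius function of the poset: `mu = ζ⁻¹`. -/
def IsMobius [PartialOrder α] [LocallyFiniteOrder α] (mu : α → α → ℤ) : Prop :=
  (∀ s : α, mu s s = 1) ∧
  (∀ ⦃s t : α⦄, s < t → ∑ w ∈ Finset.Icc s t, mu s w = 0) ∧
  (∀ ⦃s t : α⦄, s < t → ∑ w ∈ Finset.Icc s t, mu w t = 0)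

/-- The characteristic function `χ = μ·ζ^rev`, i.e. `χ_{st}(x) = Σ_{s≤w≤t} μ_{sw} x^{ρ_{wt}}`. -/
def chi [PartialOrder α] [LocallyFiniteOrder α] (ρ : α → α → ℕ) (mu : α → α → ℤ) :
    α → α → Polynomial ℤ :=
  fun s t => ∑ w ∈ Finset.Icc s t, Polynomial.C (mu s w) * X ^ ρ w t

/-- Convolution `ζ^rev · a`, where `ζ^rev_{sw} = x^{ρ_{sw}}`.  Applied to the Chow function `H`
of the kernel `χ` (whose left KLS function is `g = ζ`) it gives the left augmented Chow function
`G = g^rev · H`; applied to the right KLS function `f` it gives the `Z`-function `Z = g^rev·f`. -/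
def zrevConv [PartialOrder α] [LocallyFiniteOrder α] (ρ : α → α → ℕ)
    (a : α → α → Polynomial ℤ) : α → α → Polynomial ℤ :=
  fun s t => ∑ w ∈ Finset.Icc s t, X ^ ρ s w * a w t

/-- `rk` witnesses that the finite bounded poset is graded: covering relations increase `rk`
by exactly one, `rk` is strictly monotone (automatic in the finite graded case), and `rk ⊥ = 0`. -/
structure GradedData [PartialOrder α] [BoundedOrder α] (rk : α → ℕ) : Prop where
  cov : ∀ ⦃a b : α⦄, a ⋖ b → rk b = rk a + 1
  mono : StrictMono rk
  bot : rk (⊥ : α) = 0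

/-- The weak rank function `ρ_{st} = rk t - rk s` induced by a rank function `rk`. -/
def rdiff (rk : α → ℕ) : α → α → ℕ := fun a b => rk b - rk a

end

noncomputable section

/-- The weight `φ_{st} = x (x^{ρ_{st} - 1} - 1)/(x - 1)` of a step `s < t` of a chain, written as
the polynomial `x (1 + x + ⋯ + x^{ρ_{st} - 2})`. -/
def stepWeight {α : Type*} (rk : α → ℕ) (s t : α) : Polynomial ℤ :=
  X * ∑ j ∈ Finset.range (rk t - rk s - 1), X ^ j

/-- The sum of the weights of all chains `s = p_0 < p_1 < ⋯ < p_m` with exactly `m` steps. -/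
def chainSum {α : Type*} [PartialOrder α] [Fintype α] (rk : α → ℕ) (m : ℕ) (s : α) :
    Polynomial ℤ :=
  ∑ p ∈ Finset.univ.filter (fun p : Fin (m + 1) → α => StrictMono p ∧ p 0 = s),
    ∏ i : Fin m, stepWeight rk (p i.castSucc) (p i.succ)

end

/-- Interchange of summation over `s ≤ w ≤ v ≤ t`. -/
lemma sum_Icc_comm {α M : Type*} [PartialOrder α] [LocallyFiniteOrder α] [AddCommMonoid M]
    (f : α → α → M) (s t : α) :
    ∑ w ∈ Finset.Icc s t, ∑ v ∈ Finset.Icc w t, f w v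
      = ∑ v ∈ Finset.Icc s t, ∑ w ∈ Finset.Icc s v, f w v := by
  refine Finset.sum_comm' ?_
  intro w v
  simp only [Finset.mem_Icc]
  constructor
  · rintro ⟨⟨h1, h2⟩, h3, h4⟩
    exact ⟨⟨h1, h3⟩, h1.trans h3, h4⟩
  · rintro ⟨⟨h1, h2⟩, h3, h4⟩
    exact ⟨⟨h1, h2.trans h4⟩, h2, h4⟩

/-- The identity `ζ · χ = ζ^rev`. -/
lemma sum_chi {α : Type*} [PartialOrder α] [LocallyFiniteOrder α] (ρ : α → α → ℕ)
    (mu : α → α → ℤ) (hmu : IsMobius mu) {s t : α} (hst : s ≤ t) :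
    ∑ w ∈ Finset.Icc s t, chi ρ mu w t = X ^ ρ s t := by
  unfold chi
  rw [sum_Icc_comm (fun w v => Polynomial.C (mu w v) * X ^ ρ v t)]
  rw [Finset.sum_eq_single s]
  · simp [hmu.1]
  · intro v hv hne
    have hlt : s < v := lt_of_le_of_ne (Finset.mem_Icc.1 hv).1 (Ne.symm hne)
    rw [← Finset.sum_mul, ← map_sum, hmu.2.2 hlt]
    simp
  · intro h
    exact absurd (Finset.mem_Icc.2 ⟨le_rfl, hst⟩) h

/-- `χ_{st}` vanishes at `1`, so the division defining the reduced kernel is exact. -/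
lemma mul_red_chi {α : Type*} [PartialOrder α] [LocallyFiniteOrder α] (ρ : α → α → ℕ)
    (mu : α → α → ℤ) (hmu : IsMobius mu) {s t : α} (hst : s < t) :
    (X - 1) * red (chi ρ mu) s t = chi ρ mu s t := by
  have hroot : (chi ρ mu s t).IsRoot 1 := by
    simp only [Polynomial.IsRoot, chi, Polynomial.eval_finsetSum]
    simpa using hmu.2.1 hst
  have h := Polynomial.mul_divByMonic_eq_iff_isRoot.2 hroot
  simpa [red, hst.ne] using h

/-- Off the diagonal, `ζ · χ̄` is the step weight. -/
lemma sum_red_chi {α : Type*} [PartialOrder α] [LocallyFiniteOrder α] (rk : α → ℕ)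
    (hmono : StrictMono rk) (mu : α → α → ℤ) (hmu : IsMobius mu) {s t : α} (hst : s < t) :
    ∑ w ∈ Finset.Icc s t, red (chi (rdiff rk) mu) w t = stepWeight rk s t := by
  have hX : (X - 1 : Polynomial ℤ) ≠ 0 := by
    simpa using Polynomial.X_sub_C_ne_zero (1 : ℤ)
  apply mul_left_cancel₀ hX
  have hsum := sum_chi (rdiff rk) mu hmu hst.le
  rw [← Finset.Ico_insert_right hst.le,
    Finset.sum_insert Finset.right_notMem_Ico] at hsum ⊢
  rw [mul_add, Finset.mul_sum,
    Finset.sum_congr rfl fun w hw => mul_red_chi (rdiff rk) mu hmu (Finset.mem_Ico.1 hw).2]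
  have hd : chi (rdiff rk) mu t t = 1 := by simp [chi, rdiff, hmu.1]
  rw [hd] at hsum
  rw [eq_sub_of_add_eq' hsum]
  obtain ⟨k, hk⟩ : ∃ k, rk t - rk s = k + 1 :=
    ⟨rk t - rk s - 1, by have := hmono hst; omega⟩
  have hgeom := mul_geom_sum (X : Polynomial ℤ) k
  simp only [stepWeight, rdiff, red, hk, Nat.add_sub_cancel, if_true]
  rw [mul_left_comm, hgeom]
  ring

/-- The recursion `ℋ_{st} = 1 + Σ_{s < w ≤ t} φ_{sw} ℋ_{wt}`, from `(ζ · χ̄) · ℋ = -ζ`. -/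
lemma chow_recursion {α : Type*} [PartialOrder α] [LocallyFiniteOrder α] (rk : α → ℕ)
    (hmono : StrictMono rk) (mu : α → α → ℤ) (hmu : IsMobius mu)
    (H : α → α → Polynomial ℤ) (hH : IsChow (chi (rdiff rk) mu) H) {s t : α} (hst : s ≤ t) :
    H s t = 1 + ∑ w ∈ Finset.Ioc s t, stepWeight rk s w * H w t := by
  have h1 : ∑ w ∈ Finset.Icc s t, conv (red (chi (rdiff rk) mu)) H w t = -1 := by
    rw [Finset.sum_congr rfl fun w hw => hH.left (Finset.mem_Icc.1 hw).2]
    simp [dlt, hst]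
  unfold conv at h1
  rw [sum_Icc_comm (fun w v => red (chi (rdiff rk) mu) w v * H v t)] at h1
  rw [← Finset.Ioc_insert_left hst, Finset.sum_insert Finset.left_notMem_Ioc] at h1
  have h2 : ∑ v ∈ Finset.Ioc s t, ∑ w ∈ Finset.Icc s v, red (chi (rdiff rk) mu) w v * H v t
      = ∑ v ∈ Finset.Ioc s t, stepWeight rk s v * H v t := by
    refine Finset.sum_congr rfl fun v hv => ?_
    rw [← Finset.sum_mul, sum_red_chi rk hmono mu hmu (Finset.mem_Ioc.1 hv).1]
  rw [h2] at h1
  simp only [Finset.Icc_self, Finset.sum_singleton, red, if_true] at h1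
  linear_combination -h1

lemma chainSum_zero {α : Type*} [PartialOrder α] [Fintype α] (rk : α → ℕ) (s : α) :
    chainSum rk 0 s = 1 := by
  have : Subsingleton (Fin (0 + 1)) := inferInstanceAs (Subsingleton (Fin 1))
  unfold chainSum
  rw [Finset.sum_eq_single (fun _ => s)]
  · simp
  · intro p hp hne
    refine absurd (funext fun i => ?_) hne
    rw [Subsingleton.elim i 0]
    exact (Finset.mem_filter.1 hp).2.2
  · intro h
    refine absurd (Finset.mem_filter.2 ⟨Finset.mem_univ _, ?_, rfl⟩) h
    exact Subsingleton.strictMono _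

/-- A chain with `m + 1` steps is its first step followed by a chain with `m` steps. -/
lemma chainSum_succ {α : Type*} [PartialOrder α] [OrderTop α] [Fintype α] [LocallyFiniteOrder α]
    (rk : α → ℕ) (m : ℕ) (s : α) :
    chainSum rk (m + 1) s = ∑ w ∈ Finset.Ioc s ⊤, stepWeight rk s w * chainSum rk m w := by
  unfold chainSum
  simp_rw [Finset.mul_sum]
  rw [Finset.sum_sigma']
  refine Finset.sum_bij' (fun p _ => ⟨p 1, Fin.tail p⟩) (fun q _ => Fin.cons s q.2) ?_ ?_ ?_ ?_ ?_
  · intro p hp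
    obtain ⟨hp, hp0⟩ := (Finset.mem_filter.1 hp).2
    simp only [Finset.mem_sigma, Finset.mem_Ioc, Finset.mem_filter, Finset.mem_univ, true_and]
    refine ⟨⟨?_, le_top⟩, ?_, rfl⟩
    · rw [← hp0]
      exact hp (by simp)
    · exact fun i j hij => hp (Fin.succ_lt_succ_iff.2 hij)
  · rintro ⟨w, q⟩ hq
    simp only [Finset.mem_sigma, Finset.mem_Ioc, Finset.mem_filter, Finset.mem_univ, true_and]
      at hq ⊢
    obtain ⟨⟨hsw, -⟩, hq, hq0⟩ := hq
    refine ⟨Fin.strictMono_iff_lt_succ.2 fun i => ?_, rfl⟩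
    refine Fin.cases ?_ (fun i => ?_) i
    · simpa [hq0] using hsw
    · rw [← Fin.succ_castSucc, Fin.cons_succ, Fin.cons_succ]
      exact hq (Fin.castSucc_lt_succ)
  · intro p hp
    obtain ⟨hp, hp0⟩ := (Finset.mem_filter.1 hp).2
    dsimp only
    rw [← hp0, Fin.cons_self_tail]
  · rintro ⟨w, q⟩ hq
    simp only [Finset.mem_sigma, Finset.mem_filter] at hq
    obtain ⟨-, -, -, rfl⟩ := hq
    rfl
  · intro p hp
    obtain ⟨hp, hp0⟩ := (Finset.mem_filter.1 hp).2
    rw [Fin.prod_univ_succ, ← hp0]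
    rfl

lemma chainSum_eq_zero {α : Type*} [PartialOrder α] [Fintype α] (rk : α → ℕ) {m : ℕ}
    (hm : Fintype.card α ≤ m) (s : α) : chainSum rk m s = 0 := by
  unfold chainSum
  refine Finset.sum_eq_zero fun p hp => ?_
  have h := Fintype.card_le_of_injective p (Finset.mem_filter.1 hp).2.1.injective
  rw [Fintype.card_fin] at h
  omega

/-- Theorem 4.4: for a finite graded bounded poset, the `χ`-Chow polynomial is
`ℋ_P(x) = Σ_{0̂ = p_0 < p_1 < ⋯ < p_m ≤ 1̂} Π_{i=1}^m x (x^{ρ(p_i)-ρ(p_{i-1})-1} - 1)/(x-1)`;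
each factor `x (x^{k-1}-1)/(x-1)` is written as the polynomial `x·(1 + x + ⋯ + x^{k-2})`. -/
theorem chi_chow_chain_expansion {α : Type*}
    [PartialOrder α] [BoundedOrder α] [Fintype α] [LocallyFiniteOrder α]
    (rk : α → ℕ) (hg : GradedData rk)
    (mu : α → α → ℤ) (hmu : IsMobius mu)
    (H : α → α → Polynomial ℤ) (hH : IsChow (chi (rdiff rk) mu) H) :
    H ⊥ ⊤ = ∑ m ∈ Finset.range (Fintype.card α),
      ∑ p ∈ Finset.univ.filter (fun p : Fin (m + 1) → α => StrictMono p ∧ p 0 = ⊥),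
        ∏ i : Fin m,
          (X * ∑ j ∈ Finset.range (rk (p i.succ) - rk (p i.castSucc) - 1), X ^ j) := by
  have key : ∀ s : α, H s ⊤ = ∑ m ∈ Finset.range (Fintype.card α), chainSum rk m s := by
    intro s
    induction s using WellFoundedGT.induction with
    | ind s ih =>
      rw [chow_recursion rk hg.mono mu hmu H hH le_top]
      -- The vanishing term `m = |P|` is added so that the index can be shifted by one.
      have hext : ∑ m ∈ Finset.range (Fintype.card α), chainSum rk m s
          = ∑ m ∈ Finset.range (Fintype.card α + 1), chainSum rk m s := by
        rw [Finset.sum_range_succ, chainSum_eq_zero rk le_rfl, add_zero]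
      rw [hext, Finset.sum_range_succ', chainSum_zero, add_comm]
      congr 1
      simp_rw [chainSum_succ]
      rw [Finset.sum_comm]
      refine Finset.sum_congr rfl fun w hw => ?_
      rw [ih w (Finset.mem_Ioc.1 hw).1, Finset.mul_sum]
  exact key ⊥
end

section
/- Let P be a finite graded bounded poset and let aug(P) be the poset obtained from P by adjoining a new minimum element. Then the left χ-augmented Chow polynomial of P equals the χ-Chow polynomial of aug(P): G_P(x) = ℋ_{aug(P)}(x). -/
/-!
Identify `R` with `P` plus a new minimum, via an order embedding `i : P ↪o R` whose range is
`R ∖ {⊥}`.  Since intervals `[i p, i q]` of `R` are copies of intervals of `P`, the Möbius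
functions, the rank differences, the characteristic functions and the Chow functions of `P` and
`R` agree on them (`mobius_embed`, `rank_embed`, `chi_embed`, `chow_embed`).

On intervals starting at the new minimum, `μ_R(⊥, i q)` is `-1` for `q = ⊥` and `0` otherwise
(`mobius_bot_embed`), so `χ_R(⊥, i p) = x^{ρ(p)+1} - x^{ρ(p)} = x^{ρ(p)} (x - 1)`
(`chi_bot_embed`), and the reduced characteristic function there is `x^{ρ(p)}`.  The defining
identity `χ̄ · ℋ = -δ` of the Chow function at `(⊥, ⊤)` in `R` then reads
`ℋ_R(⊥, ⊤) = ∑_p x^{ρ(p)} ℋ_P(p, ⊤)`, which is the left augmented Chow polynomial of `P`.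
-/

open Finset Polynomial
open scoped Classical

section Augmentation

variable {P R : Type*} [PartialOrder P] [LocallyFiniteOrder P]
  [PartialOrder R] [LocallyFiniteOrder R]

/-- The embedding `i : P ↪o R` exhibits `R` as `P` with a new minimum adjoined. -/
structure IsAugEmbed [OrderBot R] (i : P ↪o R) : Prop where
  ne_bot : ∀ p, i p ≠ ⊥
  cases : ∀ r, r = ⊥ ∨ ∃ p, i p = r

theorem IsAugEmbed.icc [OrderBot R] {i : P ↪o R} (hi : IsAugEmbed i) (p q : P) :
    Finset.Icc (i p) (i q) = (Finset.Icc p q).map i.toEmbedding := by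
  ext r
  simp only [Finset.mem_Icc, Finset.mem_map, RelEmbedding.coe_toEmbedding]
  constructor
  · rintro ⟨h1, h2⟩
    rcases hi.cases r with rfl | ⟨w, rfl⟩
    · exact absurd (le_bot_iff.1 h1) (hi.ne_bot p)
    · exact ⟨w, ⟨i.le_iff_le.1 h1, i.le_iff_le.1 h2⟩, rfl⟩
  · rintro ⟨w, ⟨h1, h2⟩, rfl⟩
    exact ⟨i.le_iff_le.2 h1, i.le_iff_le.2 h2⟩

theorem IsAugEmbed.sum_icc [OrderBot R] {i : P ↪o R} (hi : IsAugEmbed i)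
    {M : Type*} [AddCommMonoid M] (f : R → M) (p q : P) :
    ∑ w ∈ Finset.Icc (i p) (i q), f w = ∑ w ∈ Finset.Icc p q, f (i w) := by
  rw [hi.icc, Finset.sum_map]
  rfl

theorem IsAugEmbed.sum_icc_bot [OrderBot P] [OrderBot R] {i : P ↪o R} (hi : IsAugEmbed i)
    {M : Type*} [AddCommMonoid M] (f : R → M) (q : P) :
    ∑ w ∈ Finset.Icc ⊥ (i q), f w = f ⊥ + ∑ w ∈ Finset.Icc ⊥ q, f (i w) := by
  rw [← hi.sum_icc, ← Finset.sum_insert]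
  · congr 1
    ext r
    simp only [Finset.mem_Icc, Finset.mem_insert, bot_le, true_and]
    rcases hi.cases r with rfl | ⟨w, rfl⟩
    · simp
    · simp [hi.ne_bot]
  · simp only [Finset.mem_Icc, le_bot_iff, hi.ne_bot, false_and, not_false_eq_true]

theorem mobius_embed [OrderBot R] {i : P ↪o R} (hi : IsAugEmbed i) [Finite P]
    {muP : P → P → ℤ} (hP : IsMobius muP) {muR : R → R → ℤ} (hR : IsMobius muR)
    (p q : P) (h : p ≤ q) : muR (i p) (i q) = muP p q := by
  induction q using WellFoundedLT.induction with
  | ind q ih =>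
    rcases h.eq_or_lt with rfl | hlt
    · rw [hP.1, hR.1]
    · have h1 := hP.2.1 hlt
      have h2 := hR.2.1 (i.lt_iff_lt.2 hlt)
      rw [hi.sum_icc] at h2
      rw [← Finset.sum_erase_add _ _ (Finset.right_mem_Icc.2 h)] at h1 h2
      have h3 : ∑ w ∈ (Finset.Icc p q).erase q, muR (i p) (i w)
          = ∑ w ∈ (Finset.Icc p q).erase q, muP p w := by
        refine Finset.sum_congr rfl fun w hw => ?_
        rw [Finset.mem_erase, Finset.mem_Icc] at hw
        exact ih w (lt_of_le_of_ne hw.2.2 hw.1) hw.2.1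
      rw [h3] at h2
      linarith

/-- The Möbius values from the new minimum: that minimum has a unique cover, the old one. -/
theorem mobius_bot_embed [OrderBot P] [OrderBot R] {i : P ↪o R} (hi : IsAugEmbed i) [Finite P]
    {muR : R → R → ℤ} (hR : IsMobius muR) (q : P) :
    muR ⊥ (i q) = if q = ⊥ then -1 else 0 := by
  induction q using WellFoundedLT.induction with
  | ind q ih =>
    have h2 := hR.2.1 (bot_lt_iff_ne_bot.2 (hi.ne_bot q))
    rw [hi.sum_icc_bot, hR.1,
      ← Finset.sum_erase_add _ _ (Finset.right_mem_Icc.2 (bot_le (a := q)))] at h2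
    have h3 : ∑ w ∈ (Finset.Icc ⊥ q).erase q, muR ⊥ (i w)
        = ∑ w ∈ (Finset.Icc ⊥ q).erase q, if w = ⊥ then (-1 : ℤ) else 0 := by
      refine Finset.sum_congr rfl fun w hw => ?_
      rw [Finset.mem_erase, Finset.mem_Icc] at hw
      exact ih w (lt_of_le_of_ne hw.2.2 hw.1)
    rw [h3, Finset.sum_ite_eq'] at h2
    by_cases hq : q = ⊥
    · subst hq
      simp at h2 ⊢
      linarith
    · simp [hq, bot_lt_iff_ne_bot] at h2 ⊢
      linarith

theorem rank_embed [BoundedOrder P] [BoundedOrder R] {i : P ↪o R} (hi : IsAugEmbed i) [Finite P]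
    {rkP : P → ℕ} (hP : GradedData rkP) {rkR : R → ℕ} (hR : GradedData rkR) (p : P) :
    rkR (i p) = rkP p + 1 := by
  induction p using WellFoundedLT.induction with
  | ind p ih =>
    by_cases hp : p = ⊥
    · subst hp
      have hc : (⊥ : R) ⋖ i ⊥ := by
        refine ⟨bot_lt_iff_ne_bot.2 (hi.ne_bot _), fun r h1 h2 => ?_⟩
        rcases hi.cases r with rfl | ⟨w, rfl⟩
        · exact lt_irrefl _ h1
        · exact not_lt_bot (i.lt_iff_lt.1 h2)
      rw [hR.cov hc, hR.bot, hP.bot]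
    · obtain ⟨q, -, hq⟩ := exists_le_covBy_of_lt (bot_lt_iff_ne_bot.2 hp)
      have hc : i q ⋖ i p := by
        refine ⟨i.lt_iff_lt.2 hq.1, fun r h1 h2 => ?_⟩
        rcases hi.cases r with rfl | ⟨w, rfl⟩
        · exact not_lt_bot h1
        · exact hq.2 (i.lt_iff_lt.1 h1) (i.lt_iff_lt.1 h2)
      rw [hR.cov hc, hP.cov hq, ih q hq.1]

theorem chi_embed [BoundedOrder P] [BoundedOrder R] {i : P ↪o R} (hi : IsAugEmbed i) [Finite P]
    {rkP : P → ℕ} (hgP : GradedData rkP) {rkR : R → ℕ} (hgR : GradedData rkR)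
    {muP : P → P → ℤ} (hP : IsMobius muP) {muR : R → R → ℤ} (hR : IsMobius muR) (p q : P) :
    chi (rdiff rkR) muR (i p) (i q) = chi (rdiff rkP) muP p q := by
  unfold chi rdiff
  rw [hi.sum_icc]
  refine Finset.sum_congr rfl fun w hw => ?_
  rw [mobius_embed hi hP hR p w (Finset.mem_Icc.1 hw).1, rank_embed hi hgP hgR,
    rank_embed hi hgP hgR, Nat.add_sub_add_right]

theorem chi_bot_embed [BoundedOrder P] [BoundedOrder R] {i : P ↪o R} (hi : IsAugEmbed i)
    [Finite P] {rkP : P → ℕ} (hgP : GradedData rkP) {rkR : R → ℕ} (hgR : GradedData rkR)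
    {muR : R → R → ℤ} (hR : IsMobius muR) (p : P) :
    chi (rdiff rkR) muR ⊥ (i p) = (X - 1) * X ^ rkP p := by
  unfold chi rdiff
  rw [hi.sum_icc_bot, hR.1, hgR.bot]
  simp only [rank_embed hi hgP hgR, mobius_bot_embed hi hR, Nat.add_sub_add_right]
  rw [Finset.sum_eq_single ⊥]
  · simp [hgP.bot]
    ring
  · intro b _ hb
    simp [hb]
  · simp

/-- Solving `χ̄ · ℋ = -δ` for `ℋ_{st}` in terms of the values `ℋ_{wt}` with `s < w ≤ t`. -/
theorem IsChow.eq_add_sum {κ H : P → P → Polynomial ℤ} (h : IsChow κ H) {s t : P} (hst : s ≤ t) :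
    H s t = dlt s t + ∑ w ∈ (Finset.Icc s t).erase s, (κ s w /ₘ (X - 1)) * H w t := by
  have h1 := h.left hst
  unfold conv at h1
  rw [← Finset.sum_erase_add _ _ (Finset.left_mem_Icc.2 hst)] at h1
  have h2 : ∑ w ∈ (Finset.Icc s t).erase s, red κ s w * H w t
      = ∑ w ∈ (Finset.Icc s t).erase s, (κ s w /ₘ (X - 1)) * H w t := by
    refine Finset.sum_congr rfl fun w hw => ?_
    rw [red, if_neg (Finset.ne_of_mem_erase hw).symm]
  rw [h2, red, if_pos rfl] at h1
  linear_combination -h1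

theorem chow_embed [BoundedOrder P] [BoundedOrder R] {i : P ↪o R} (hi : IsAugEmbed i) [Finite P]
    {κP HP : P → P → Polynomial ℤ} (hP : IsChow κP HP)
    {κR HR : R → R → Polynomial ℤ} (hR : IsChow κR HR)
    (hκ : ∀ p q, κR (i p) (i q) = κP p q) (p t : P) (h : p ≤ t) :
    HR (i p) (i t) = HP p t := by
  induction p using WellFoundedGT.induction with
  | ind p ih =>
    have hmem : (Finset.Icc (i p) (i t)).erase (i p)
        = ((Finset.Icc p t).erase p).map i.toEmbedding := by
      rw [hi.icc, Finset.map_erase]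
      rfl
    rw [hP.eq_add_sum h, hR.eq_add_sum (i.le_iff_le.2 h), hmem, Finset.sum_map]
    congr 1
    · simp [dlt]
    · refine Finset.sum_congr rfl fun w hw => ?_
      rw [Finset.mem_erase, Finset.mem_Icc] at hw
      change (κR (i p) (i w) /ₘ (X - 1)) * HR (i w) (i t) = _
      rw [hκ, ih w (lt_of_le_of_ne hw.2.1 (Ne.symm hw.1)) hw.2.2]

end Augmentation

/-- Corollary 4.7: if `R ≅ aug(P)` is the augmentation of a finite graded bounded poset `P`
(adjoin a new minimum), then the left `χ`-augmented Chow polynomial of `P` equals the `χ`-Chow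
polynomial of `aug(P)`: `G_P(x) = ℋ_{aug(P)}(x)`. -/
theorem aug_chow_eq_chow_of_aug {P R : Type*}
    [PartialOrder P] [BoundedOrder P] [Fintype P] [LocallyFiniteOrder P]
    [PartialOrder R] [BoundedOrder R] [Fintype R] [LocallyFiniteOrder R]
    (rkP : P → ℕ) (hgP : GradedData rkP) (muP : P → P → ℤ) (hmuP : IsMobius muP)
    (HP : P → P → Polynomial ℤ) (hHP : IsChow (chi (rdiff rkP) muP) HP)
    (rkR : R → ℕ) (hgR : GradedData rkR) (muR : R → R → ℤ) (hmuR : IsMobius muR)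
    (HR : R → R → Polynomial ℤ) (hHR : IsChow (chi (rdiff rkR) muR) HR)
    (e : R ≃o WithBot P) :
    zrevConv (rdiff rkP) HP ⊥ ⊤ = HR ⊥ ⊤ := by
  let i : P ↪o R := WithBot.coeOrderHom.trans e.symm.toOrderEmbedding
  have hi_apply : ∀ p, i p = e.symm (p : WithBot P) := fun _ => rfl
  have hi : IsAugEmbed i := by
    refine ⟨fun p h => ?_, fun r => ?_⟩
    · rw [hi_apply, OrderIso.symm_apply_eq, OrderIso.map_bot] at h
      exact WithBot.coe_ne_bot h
    · rcases hr : e r with _ | p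
      · left
        rw [← OrderIso.map_bot e.symm, OrderIso.eq_symm_apply]
        exact hr
      · right
        refine ⟨p, ?_⟩
        rw [hi_apply, OrderIso.symm_apply_eq]
        exact hr.symm
  have htop : i ⊤ = ⊤ := by
    rw [hi_apply, WithBot.coe_top, OrderIso.map_top]
  have hmem : (Finset.Icc (⊥ : R) (i ⊤)).erase ⊥
      = (Finset.Icc (⊥ : P) ⊤).map i.toEmbedding := by
    ext r
    rcases hi.cases r with rfl | ⟨w, rfl⟩
    · simp [hi.ne_bot]
    · simp [hi.ne_bot]
  rw [← htop, hHR.eq_add_sum bot_le, hmem, Finset.sum_map, dlt,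
    if_neg (hi.ne_bot _).symm, zero_add, zrevConv]
  refine Finset.sum_congr rfl fun w _ => ?_
  change _ = (chi (rdiff rkR) muR ⊥ (i w) /ₘ (X - 1)) * HR (i w) (i ⊤)
  have hX : (X - 1 : Polynomial ℤ).Monic := by simpa using monic_X_sub_C (1 : ℤ)
  rw [chi_bot_embed hi hgP hgR hmuR, mul_divByMonic_cancel_left _ hX,
    chow_embed hi hHP hHR (chi_embed hi hgP hgR hmuP hmuR) w ⊤ le_top, rdiff, hgP.bot,
    Nat.sub_zero]
end

section
/- Let P and Q be finite graded bounded posets and let P*Q = P ⊕ (Q ∖ {0̂_Q}) denote their join. Then the left χ-augmented Chow polynomials satisfy G_{P*Q}(x) = G_P(x) · G_Q(x). -/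
/-!
Working in the incidence algebra, write `ζʳ` for `ζ^rev`, so that `χ = μ ζʳ`, and
`(x - 1) χ̄ = χ - x δ` because `χ_{st}(1) = 0` for `s < t`. Put `G = ζʳ H` and `K = G (ζʳ)⁻¹`.
From `H χ̄ = -δ` one gets `G χ - x G = (1 - x) ζʳ`, and multiplying on the right by
`χ⁻¹ = (ζʳ)⁻¹ ζ` gives `K (ζʳ - x ζ) = (1 - x) ζ`. Reading off the row of `⊥`:

* `G_t = ∑_{w ≤ t} K_w x^{ρ_{wt}}`, and
* `∑_{w ≤ t} K_w (x^{ρ_{wt}} - x) = 1 - x` (`exists_kRow`).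

The second family of equations is triangular with diagonal entries `1 - x`, hence determines the
row `K` (`kRow_unique`), and it only involves the interval `[⊥, t]`. For a join `R` of `P` and `Q`,
the function equal to `K^P` on `P` and to `G_P · K^Q` on `Q ∖ {⊥}` satisfies the equations of `R`,
hence is `K^R`. Substituting it in `G_R = 1 - x + x ∑_w K^R_w` gives `G_R = G_P G_Q`.
-/

open Finset Polynomial
open scoped Classical

/-! ### The incidence algebra -/

/-- The element of the incidence algebra with the values of `a` on the intervals `s ≤ t`. -/
noncomputable def incOf {α : Type*} [PartialOrder α] (a : α → α → ℤ[X]) : IncidenceAlgebra ℤ[X] α :=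
  ⟨fun s t => if s ≤ t then a s t else 0, fun _ _ h => if_neg h⟩

section Inc

variable {α : Type*} [PartialOrder α]

lemma incOf_apply (a : α → α → ℤ[X]) {s t : α} (h : s ≤ t) : incOf a s t = a s t := if_pos h

lemma incOf_congr {a b : α → α → ℤ[X]} (h : ∀ ⦃s t⦄, s ≤ t → a s t = b s t) :
    incOf a = incOf b := by
  refine IncidenceAlgebra.ext fun s t hst => ?_
  rw [incOf_apply _ hst, incOf_apply _ hst, h hst]

lemma incOf_dlt : incOf (dlt : α → α → ℤ[X]) = 1 := by
  refine IncidenceAlgebra.ext fun s t hst => ?_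
  simp [incOf_apply _ hst, dlt]

lemma rdiff_add {rk : α → ℕ} (hm : StrictMono rk) {s w t : α} (h₁ : s ≤ w) (h₂ : w ≤ t) :
    rdiff rk s w + rdiff rk w t = rdiff rk s t := by
  have := hm.monotone h₁
  have := hm.monotone h₂
  simp only [rdiff]
  omega

variable [LocallyFiniteOrder α]

lemma incOf_mul (a b : α → α → ℤ[X]) : incOf a * incOf b = incOf (conv a b) := by
  refine IncidenceAlgebra.ext fun s t hst => ?_
  rw [IncidenceAlgebra.mul_apply, incOf_apply _ hst, conv]
  refine Finset.sum_congr rfl fun w hw => ?_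
  rw [Finset.mem_Icc] at hw
  rw [incOf_apply _ hw.1, incOf_apply _ hw.2]

/-- `ζ μ = δ`, with constant polynomials as values. -/
lemma zeta_mul_mu_inc {mu : α → α → ℤ} (hmu : IsMobius mu) :
    incOf (fun _ _ : α => (1 : ℤ[X])) * incOf (fun s t => C (mu s t)) = 1 := by
  rw [incOf_mul, ← incOf_dlt]
  refine incOf_congr fun s t hst => ?_
  simp only [conv, dlt, one_mul]
  rw [← map_sum C]
  rcases hst.eq_or_lt with rfl | h
  · simp [hmu.1]
  · simp [hmu.2.2 h, h.ne]

/-- `μ ζ = δ`, with constant polynomials as values. -/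
lemma mu_mul_zeta_inc {mu : α → α → ℤ} (hmu : IsMobius mu) :
    incOf (fun s t => C (mu s t)) * incOf (fun _ _ : α => (1 : ℤ[X])) = 1 := by
  rw [incOf_mul, ← incOf_dlt]
  refine incOf_congr fun s t hst => ?_
  simp only [conv, dlt, mul_one]
  rw [← map_sum C]
  rcases hst.eq_or_lt with rfl | h
  · simp [hmu.1]
  · simp [hmu.2.1 h, h.ne]

/-- Twisting by `x^{ρ_{st}}` is multiplicative because `ρ` is additive, so it preserves inverses. -/
lemma twist_mul {rk : α → ℕ} (hm : StrictMono rk) {a b : α → α → ℤ[X]}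
    (h : incOf a * incOf b = 1) :
    incOf (fun s t => a s t * X ^ rdiff rk s t) * incOf (fun s t => b s t * X ^ rdiff rk s t)
      = 1 := by
  rw [incOf_mul] at h ⊢
  refine IncidenceAlgebra.ext fun s t hst => ?_
  have h' : conv a b s t = (1 : IncidenceAlgebra ℤ[X] α) s t := by rw [← h, incOf_apply _ hst]
  rw [incOf_apply _ hst]
  have : conv (fun s t => a s t * X ^ rdiff rk s t) (fun s t => b s t * X ^ rdiff rk s t) s t
      = conv a b s t * X ^ rdiff rk s t := by
    simp only [conv, Finset.sum_mul]
    refine Finset.sum_congr rfl fun w hw => ?_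
    rw [Finset.mem_Icc] at hw
    rw [← rdiff_add hm hw.1 hw.2]
    ring
  rw [this, h', IncidenceAlgebra.one_apply]
  split_ifs with hst'
  · simp [hst', rdiff]
  · simp

/-- `(x - 1) χ̄ = χ - x δ`. Here the division by `x - 1` is exact because
`χ_{st}(1) = ∑ μ_{sw} = 0` for `s < t`. -/
lemma smul_red_chi (rk : α → ℕ) {mu : α → α → ℤ} (hmu : IsMobius mu) :
    (X - 1 : ℤ[X]) • incOf (red (chi (rdiff rk) mu))
      = incOf (chi (rdiff rk) mu) - (X : ℤ[X]) • 1 := by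
  refine IncidenceAlgebra.ext fun s t hst => ?_
  rw [IncidenceAlgebra.constSMul_apply, IncidenceAlgebra.sub_apply,
    IncidenceAlgebra.constSMul_apply, incOf_apply _ hst, incOf_apply _ hst,
    IncidenceAlgebra.one_apply]
  rcases hst.eq_or_lt with rfl | h
  · simp [red, chi, hmu.1, rdiff]
  · have hroot : (chi (rdiff rk) mu s t).IsRoot 1 := by
      have := hmu.2.1 h
      simp only [IsRoot, chi, eval_finsetSum]
      simpa using this
    have := mul_divByMonic_eq_iff_isRoot.mpr hroot
    simpa [red, h.ne] using this

end Inc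

/-! ### The row `K` -/

/-- The row of `K = G (ζ^rev)⁻¹` at `⊥`: it computes the row of `G` and satisfies the row at `⊥`
of the equation `K (ζ^rev - x ζ) = (1 - x) ζ`. -/
lemma exists_kRow {α : Type*} [PartialOrder α] [OrderBot α] [Fintype α] [LocallyFiniteOrder α]
    {rk : α → ℕ} (hm : StrictMono rk) {mu : α → α → ℤ} (hmu : IsMobius mu)
    {H : α → α → ℤ[X]} (hH : IsChow (chi (rdiff rk) mu) H) :
    ∃ K : α → ℤ[X], ∀ t,
      zrevConv (rdiff rk) H ⊥ t = ∑ w, (if w ≤ t then K w * X ^ rdiff rk w t else 0) ∧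
      ∑ w, (if w ≤ t then K w * (X ^ rdiff rk w t - X) else 0) = 1 - X := by
  set Z := incOf (fun _ _ : α => (1 : ℤ[X])) with hZ
  set M := incOf (fun s t => C (mu s t)) with hM
  set Zr := incOf (fun s t : α => (X : ℤ[X]) ^ rdiff rk s t) with hZr
  set Mr := incOf (fun s t => C (mu s t) * X ^ rdiff rk s t) with hMr
  set B := incOf (red (chi (rdiff rk) mu)) with hB
  set Hi := incOf H with hHi
  have hMZ : M * Z = 1 := mu_mul_zeta_inc hmu
  have hMrZr : Mr * Zr = 1 := by simpa only [one_mul] using twist_mul hm (mu_mul_zeta_inc hmu)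
  have hZrMr : Zr * Mr = 1 := by simpa only [one_mul] using twist_mul hm (zeta_mul_mu_inc hmu)
  have hchi : incOf (chi (rdiff rk) mu) = M * Zr := by
    rw [hM, hZr, incOf_mul]
    rfl
  have hBeq : (X - 1 : ℤ[X]) • B = M * Zr - (X : ℤ[X]) • 1 := by
    rw [← hchi]
    exact smul_red_chi rk hmu
  have hHB : Hi * B = (-1 : ℤ[X]) • 1 := by
    rw [hHi, hB, incOf_mul, ← incOf_dlt]
    refine IncidenceAlgebra.ext fun s t hst => ?_
    rw [IncidenceAlgebra.constSMul_apply, incOf_apply _ hst, incOf_apply _ hst, hH.right hst,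
      neg_smul, one_smul]
  set G := Zr * Hi with hG
  have hGapp : ∀ t, G ⊥ t = zrevConv (rdiff rk) H ⊥ t := by
    intro t
    rw [hG, hZr, hHi, incOf_mul, incOf_apply _ bot_le]
    rfl
  have hKZr : G * Mr * Zr = G := by rw [mul_assoc, hMrZr, mul_one]
  have hKeq : G * Mr * Zr - (X : ℤ[X]) • (G * Mr * Z) = (1 - X : ℤ[X]) • Z := by
    have h1 : (X - 1 : ℤ[X]) • (G * B) = G * (M * Zr) - (X : ℤ[X]) • G := by
      rw [← mul_smul_comm, hBeq, mul_sub, mul_smul_comm, mul_one]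
    have h2 : G * B = (-1 : ℤ[X]) • Zr := by rw [hG, mul_assoc, hHB, mul_smul_comm, mul_one]
    rw [h2] at h1
    have h3 := congrArg (fun a => a * Mr * Z) h1
    simp only [sub_mul, smul_mul_assoc, hZrMr, one_mul] at h3
    have h4 : G * (M * Zr) * Mr * Z = G := by
      have : G * (M * Zr) * Mr * Z = G * (M * ((Zr * Mr) * Z)) := by simp only [mul_assoc]
      rw [this, hZrMr, one_mul, hMZ, mul_one]
    rw [h4] at h3
    rw [hKZr, ← h3, smul_smul]
    congr 1
    ring
  have happ : ∀ (a : α → α → ℤ[X]) t, (G * Mr * incOf a) ⊥ t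
      = ∑ w, if w ≤ t then (G * Mr) ⊥ w * a w t else 0 := by
    intro a t
    rw [IncidenceAlgebra.mul_apply, ← Finset.sum_filter]
    refine Finset.sum_congr (by ext; simp) fun w hw => ?_
    rw [incOf_apply _ (by simpa using hw)]
  refine ⟨fun w => (G * Mr) ⊥ w, fun t => ⟨?_, ?_⟩⟩
  · rw [← hGapp, ← happ (fun s t => X ^ rdiff rk s t) t, hKZr]
  · have h := DFunLike.congr_fun hKeq ⊥
    have h' := congrFun h t
    rw [IncidenceAlgebra.sub_apply, IncidenceAlgebra.constSMul_apply,
      IncidenceAlgebra.constSMul_apply, hZ, incOf_apply _ bot_le, hZr, happ, happ] at h'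
    rw [smul_eq_mul, smul_eq_mul, mul_one, Finset.mul_sum, ← Finset.sum_sub_distrib] at h'
    rw [← h']
    refine Finset.sum_congr rfl fun w _ => ?_
    split_ifs <;> ring

lemma kRow_unique {α : Type*} [PartialOrder α] [Fintype α] {rk : α → ℕ}
    {K L : α → ℤ[X]}
    (hK : ∀ t, ∑ w, (if w ≤ t then K w * (X ^ rdiff rk w t - X) else 0) = 1 - X)
    (hL : ∀ t, ∑ w, (if w ≤ t then L w * (X ^ rdiff rk w t - X) else 0) = 1 - X) : K = L := by
  funext t
  induction t using WellFoundedLT.induction with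
  | ind t ih =>
    have h := (hK t).trans (hL t).symm
    rw [← Finset.add_sum_erase _ _ (Finset.mem_univ t),
      ← Finset.add_sum_erase _ _ (Finset.mem_univ t)] at h
    have hrest : ∑ w ∈ univ.erase t, (if w ≤ t then K w * (X ^ rdiff rk w t - X) else 0)
        = ∑ w ∈ univ.erase t, (if w ≤ t then L w * (X ^ rdiff rk w t - X) else 0) := by
      refine Finset.sum_congr rfl fun w hw => ?_
      split_ifs with hwt
      · rw [ih w (lt_of_le_of_ne hwt (Finset.ne_of_mem_erase hw))]
      · rfl
    rw [hrest, add_left_inj, if_pos le_rfl, if_pos le_rfl] at h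
    have hne : (X ^ rdiff rk t t - X : ℤ[X]) ≠ 0 := by
      have := X_sub_C_ne_zero (1 : ℤ)
      simp only [rdiff, Nat.sub_self, pow_zero]
      rw [← neg_sub, neg_ne_zero]
      simpa using this
    exact mul_right_cancel₀ hne h

/-- `G_t = 1 - x + x ∑_{w ≤ t} K_w`, expressed as a formula for the sum. -/
lemma X_mul_sum_kRow {α : Type*} [PartialOrder α] [Fintype α] {rk : α → ℕ} {K : α → ℤ[X]}
    {t : α} {G : ℤ[X]} (hG : G = ∑ w, (if w ≤ t then K w * X ^ rdiff rk w t else 0))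
    (hK : ∑ w, (if w ≤ t then K w * (X ^ rdiff rk w t - X) else 0) = 1 - X) :
    X * ∑ w, (if w ≤ t then K w else 0) = G - (1 - X) := by
  rw [hG, ← hK, ← Finset.sum_sub_distrib, Finset.mul_sum]
  refine Finset.sum_congr rfl fun w _ => ?_
  split_ifs <;> ring

/-! ### The join -/

section Join

variable {P Q R : Type*} [PartialOrder P] [PartialOrder Q] [BoundedOrder Q] [PartialOrder R]

/-- The inclusion of `P` in the join. -/
def joinL (e : R ≃o (P ⊕ₗ {q : Q // (⊥ : Q) < q})) (p : P) : R := e.symm (Sum.inlₗ p)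

/-- The inclusion of `Q ∖ {⊥}` in the join. -/
def joinR (e : R ≃o (P ⊕ₗ {q : Q // (⊥ : Q) < q})) (q : {q : Q // (⊥ : Q) < q}) : R :=
  e.symm (Sum.inrₗ q)

variable (e : R ≃o (P ⊕ₗ {q : Q // (⊥ : Q) < q}))

lemma joinL_le_joinL {p p' : P} : joinL e p ≤ joinL e p' ↔ p ≤ p' := by
  simp [joinL]

lemma joinL_le_joinR {p : P} {q : {q : Q // (⊥ : Q) < q}} : joinL e p ≤ joinR e q := by
  simp [joinL, joinR]

lemma not_joinR_le_joinL {p : P} {q : {q : Q // (⊥ : Q) < q}} : ¬ joinR e q ≤ joinL e p := by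
  simp [joinL, joinR]

lemma joinR_le_joinR {q q' : {q : Q // (⊥ : Q) < q}} : joinR e q ≤ joinR e q' ↔ q.1 ≤ q'.1 := by
  simp [joinR]

lemma join_cases (r : R) : (∃ p, r = joinL e p) ∨ ∃ q, r = joinR e q := by
  obtain ⟨x, rfl⟩ := e.symm.surjective r
  rcases x with p | q
  · exact Or.inl ⟨p, rfl⟩
  · exact Or.inr ⟨q, rfl⟩

lemma sum_join [Fintype P] [Fintype Q] [Fintype R] (f : R → ℤ[X]) : ∑ r, f r = ∑ p, f (joinL e p) + ∑ q, f (joinR e q) :=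
  (Equiv.sum_comp (toLex.trans e.symm.toEquiv) f).symm.trans
    (Fintype.sum_sum_type fun x => f (e.symm (toLex x)))

variable [BoundedOrder P] [BoundedOrder R]

lemma joinL_bot : joinL e ⊥ = ⊥ := by
  refine le_bot_iff.mp ?_
  rcases join_cases e ⊥ with ⟨p, hp⟩ | ⟨q, hq⟩
  · rw [hp, joinL_le_joinL]; exact bot_le
  · rw [hq]; exact joinL_le_joinR e

lemma rk_joinL [Fintype P] {rkP : P → ℕ} (hgP : GradedData rkP) {rkR : R → ℕ} (hgR : GradedData rkR) (p : P) :
    rkR (joinL e p) = rkP p := by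
  induction p using WellFoundedLT.induction with
  | ind p ih =>
    rcases eq_or_ne p ⊥ with rfl | hp
    · rw [joinL_bot, hgR.bot, hgP.bot]
    · obtain ⟨w, -, hw⟩ := exists_le_covBy_of_lt (bot_lt_iff_ne_bot.mpr hp)
      have hcov : joinL e w ⋖ joinL e p := by
        refine ⟨?_, fun r h₁ h₂ => ?_⟩
        · simpa only [lt_iff_le_not_ge, joinL_le_joinL] using hw.1
        · rcases join_cases e r with ⟨v, rfl⟩ | ⟨v, rfl⟩
          · simp only [lt_iff_le_not_ge, joinL_le_joinL] at h₁ h₂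
            exact hw.2 (lt_iff_le_not_ge.mpr h₁) (lt_iff_le_not_ge.mpr h₂)
          · exact not_joinR_le_joinL e h₂.le
      rw [hgR.cov hcov, hgP.cov hw, ih w hw.1]

lemma rk_joinR [Fintype P] [Fintype Q] {rkP : P → ℕ} (hgP : GradedData rkP) {rkQ : Q → ℕ} (hgQ : GradedData rkQ)
    {rkR : R → ℕ} (hgR : GradedData rkR) (q : {q : Q // (⊥ : Q) < q}) :
    rkR (joinR e q) = rkP ⊤ + rkQ q := by
  obtain ⟨q, hq⟩ := q
  induction q using WellFoundedLT.induction with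
  | ind q ih =>
    obtain ⟨w, -, hw⟩ := exists_le_covBy_of_lt hq
    rcases (bot_le : ⊥ ≤ w).eq_or_lt with rfl | hw0
    · -- `q` is an atom of `Q`, so it covers the top of `P` in the join
      have hcov : joinL e ⊤ ⋖ joinR e ⟨q, hq⟩ := by
        refine ⟨lt_iff_le_not_ge.mpr ⟨joinL_le_joinR e, not_joinR_le_joinL e⟩, fun r h₁ h₂ => ?_⟩
        rcases join_cases e r with ⟨v, rfl⟩ | ⟨v, rfl⟩
        · exact h₁.not_ge ((joinL_le_joinL e).mpr le_top)
        · simp only [lt_iff_le_not_ge, joinR_le_joinR] at h₂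
          exact hw.2 v.2 (lt_iff_le_not_ge.mpr h₂)
      rw [hgR.cov hcov, rk_joinL e hgP hgR, hgQ.cov hw, hgQ.bot]
    · have hcov : joinR e ⟨w, hw0⟩ ⋖ joinR e ⟨q, hq⟩ := by
        refine ⟨?_, fun r h₁ h₂ => ?_⟩
        · simpa only [lt_iff_le_not_ge, joinR_le_joinR] using hw.1
        · rcases join_cases e r with ⟨v, rfl⟩ | ⟨v, rfl⟩
          · exact not_joinR_le_joinL e h₁.le
          · simp only [lt_iff_le_not_ge, joinR_le_joinR] at h₁ h₂
            exact hw.2 (lt_iff_le_not_ge.mpr h₁) (lt_iff_le_not_ge.mpr h₂)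
      rw [hgR.cov hcov, ih w hw.1 hw0, hgQ.cov hw, add_assoc]

end Join

lemma sum_bot_lt {Q : Type*} [PartialOrder Q] [OrderBot Q] [Fintype Q] (f : Q → ℤ[X]) :
    ∑ q : {q : Q // (⊥ : Q) < q}, f q = ∑ q, f q - f ⊥ := by
  rw [← Finset.add_sum_erase _ f (Finset.mem_univ ⊥), add_sub_cancel_left]
  exact (Finset.sum_subtype _ (fun x => by simp [bot_lt_iff_ne_bot]) f).symm

/-- Corollary 4.8: if `R ≅ P * Q = P ⊕ (Q ∖ {0̂_Q})` is the join of two finite graded bounded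
posets, then the left `χ`-augmented Chow polynomials satisfy `G_{P*Q}(x) = G_P(x) · G_Q(x)`. -/
theorem aug_chow_of_join {P Q R : Type*}
    [PartialOrder P] [BoundedOrder P] [Fintype P] [LocallyFiniteOrder P]
    [PartialOrder Q] [BoundedOrder Q] [Fintype Q] [LocallyFiniteOrder Q]
    [PartialOrder R] [BoundedOrder R] [Fintype R] [LocallyFiniteOrder R]
    (rkP : P → ℕ) (hgP : GradedData rkP) (muP : P → P → ℤ) (hmuP : IsMobius muP)
    (HP : P → P → Polynomial ℤ) (hHP : IsChow (chi (rdiff rkP) muP) HP)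
    (rkQ : Q → ℕ) (hgQ : GradedData rkQ) (muQ : Q → Q → ℤ) (hmuQ : IsMobius muQ)
    (HQ : Q → Q → Polynomial ℤ) (hHQ : IsChow (chi (rdiff rkQ) muQ) HQ)
    (rkR : R → ℕ) (hgR : GradedData rkR) (muR : R → R → ℤ) (hmuR : IsMobius muR)
    (HR : R → R → Polynomial ℤ) (hHR : IsChow (chi (rdiff rkR) muR) HR)
    (e : R ≃o (P ⊕ₗ {q : Q // (⊥ : Q) < q})) :
    zrevConv (rdiff rkR) HR ⊥ ⊤ = zrevConv (rdiff rkP) HP ⊥ ⊤ * zrevConv (rdiff rkQ) HQ ⊥ ⊤ := by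
  obtain ⟨KP, hKP⟩ := exists_kRow hgP.mono hmuP hHP
  obtain ⟨KQ, hKQ⟩ := exists_kRow hgQ.mono hmuQ hHQ
  obtain ⟨KR, hKR⟩ := exists_kRow hgR.mono hmuR hHR
  set GP := zrevConv (rdiff rkP) HP ⊥ ⊤ with hGP
  set GQ := zrevConv (rdiff rkQ) HQ ⊥ ⊤ with hGQ
  have hne : (1 - X : ℤ[X]) ≠ 0 := by
    rw [← neg_sub, neg_ne_zero]
    simpa using X_sub_C_ne_zero (1 : ℤ)
  have hKQbot : KQ ⊥ = 1 := by
    have h := (hKQ ⊥).2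
    simp only [le_bot_iff, Finset.sum_ite_eq', Finset.mem_univ, if_true, rdiff, Nat.sub_self,
      pow_zero] at h
    exact mul_right_cancel₀ hne (h.trans (one_mul _).symm)
  have hsumP := X_mul_sum_kRow (hKP ⊤).1 (hKP ⊤).2
  have hsumQ := X_mul_sum_kRow (hKQ ⊤).1 (hKQ ⊤).2
  have hsumR := X_mul_sum_kRow (hKR ⊤).1 (hKR ⊤).2
  have hGPsum := (hKP ⊤).1
  rw [← hGP] at hsumP hGPsum
  rw [← hGQ] at hsumQ
  simp only [le_top, if_true] at hsumP hsumQ hsumR hGPsum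
  -- the candidate for the row of `R`, transported along `e`
  let L : R → ℤ[X] := fun r => Sum.elim KP (fun q => GP * KQ q.1) (ofLex (e r))
  have hLl : ∀ p, L (joinL e p) = KP p := fun p => by simp [L, joinL]
  have hLr : ∀ q, L (joinR e q) = GP * KQ q.1 := fun q => by simp [L, joinR]
  have hL : ∀ t, ∑ w, (if w ≤ t then L w * (X ^ rdiff rkR w t - X) else 0) = 1 - X := by
    intro t
    rw [sum_join e]
    rcases join_cases e t with ⟨p, rfl⟩ | ⟨q, rfl⟩
    · simp only [joinL_le_joinL, not_joinR_le_joinL, hLl, if_false, Finset.sum_const_zero,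
        add_zero, rdiff, rk_joinL e hgP hgR]
      exact (hKP p).2
    · simp only [joinL_le_joinR, joinR_le_joinR, hLl, hLr, if_true, rdiff,
        rk_joinL e hgP hgR, rk_joinR e hgP hgQ hgR, Nat.add_sub_add_left]
      have h1 : ∑ p, KP p * (X ^ (rkP ⊤ + rkQ q - rkP p) - X)
          = GP * (X ^ rkQ q - 1) + (1 - X) := by
        have : ∑ p, KP p * (X ^ (rkP ⊤ + rkQ q - rkP p) - X)
            = GP * X ^ rkQ q - X * ∑ p, KP p := by
          rw [hGPsum, Finset.sum_mul, Finset.mul_sum, ← Finset.sum_sub_distrib]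
          refine Finset.sum_congr rfl fun p _ => ?_
          have hp : rkP p ≤ rkP ⊤ := hgP.mono.monotone le_top
          rw [rdiff, show rkP ⊤ + rkQ q - rkP p = (rkP ⊤ - rkP p) + rkQ q by omega]
          ring
        rw [this, hsumP]
        ring
      have h2 := (hKQ q.1).2
      have h3 := sum_bot_lt
        (fun w => if w ≤ q.1 then GP * KQ w * (X ^ (rkQ q - rkQ w) - X) else 0)
      have h4 : ∑ w, (if w ≤ q.1 then GP * KQ w * (X ^ (rkQ q - rkQ w) - X) else 0)
          = GP * (1 - X) := by
        rw [← h2, Finset.mul_sum]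
        refine Finset.sum_congr rfl fun w _ => ?_
        simp only [rdiff]
        split_ifs <;> ring
      rw [h1, h3, h4, if_pos bot_le, hKQbot, hgQ.bot, Nat.sub_zero]
      ring
  have hLK : KR = L := kRow_unique (fun t => (hKR t).2) hL
  rw [hLK, sum_join e] at hsumR
  simp only [hLl, hLr] at hsumR
  rw [sum_bot_lt (fun q => GP * KQ q), ← Finset.mul_sum, hKQbot] at hsumR
  linear_combination -hsumR + hsumP + GP * hsumQ
end

section
/- Let P be a finite graded bounded poset, and consider the kernel χ with right KLS function f, left KLS function g = ζ, Z-function Z = g^rev·f, Chow function ℋ, and right augmented Chow function F = ℋ·f^rev. Then F_P(x) = Z_P(x) + x·Σ_{t ∈ P, ρ(t) > 1} ℋ_{trunc([0̂,t])}(x)·Z_{t1̂}(x), where trunc([0̂,t]) is the truncation of the interval [0̂,t] (removing its coatoms), F_P = F_{0̂1̂} and Z_P = Z_{0̂1̂}. -/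
/-!
The identity comes from the factorisation `F = ℋ·f^rev = ℋ·χ·f = ℋ·μ·ζ^rev·f = (ℋ·μ)·Z`, so
`F_P = Σ_t (ℋμ)_{0̂t} Z_{t1̂}` (`conv_rev_eq`).  It remains to identify `(ℋμ)_{0̂t}`.  It is `1` for
`t = 0̂`, and for `t ≠ 0̂` the relation `ℋ·χ̄ = -δ` gives
`(ℋμ)_{0̂t} = Σ_{w < t} ℋ_{0̂w} (χ̄_{wt} + μ_{wt})` (`Hmu_eq`).

If `w` is a coatom of `[0̂,t]`, then `χ̄_{wt} = 1` and `μ_{wt} = -1`, so its summand vanishes.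
If `w < t` is not a coatom, the truncation satisfies `x χ'_{wt} = χ_{wt} + (x-1) μ_{wt}`, hence
`x χ̄'_{wt} = χ̄_{wt} + μ_{wt}` (`X_mul_red_trunc`), while `ℋ_{0̂w}` is the same in the truncation
as in `P` because the interval `[0̂,w]` is unchanged (`chow_trunc`).
So the sum is `x ℋ_{trunc([0̂,t])}` for `ρ(t) > 1`, by the relation `ℋ'·χ̄' = -δ` in the truncation,
and it is zero for `ρ(t) = 1`, when `0̂` is the only element below `t` and is a coatom.
-/

open Finset Polynomial
open scoped Classical

noncomputable section

variable {α : Type*}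

/-- A subtype of a finite partial order is a locally finite order. -/
noncomputable instance {β : Type*} [PartialOrder β] [Fintype β] {p : β → Prop} :
    LocallyFiniteOrder {x : β // p x} := by
  classical
  exact Fintype.toLocallyFiniteOrder

/-- The truncation `trunc([0̂,t])` of the interval `[0̂,t]`: all elements `w ≤ t` except the
coatoms of the interval (the elements of rank `rk t - 1`). -/
abbrev Tr [Preorder α] (rk : α → ℕ) (t : α) : Type _ :=
  {w : α // w ≤ t ∧ rk w ≠ rk t - 1}

/-- The rank function of the truncation: ranks are preserved, except that the top element `t`
gets rank `rk t - 1`. -/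
def trk [Preorder α] (rk : α → ℕ) (t : α) : Tr rk t → ℕ :=
  fun w => if (w : α) = t then rk t - 1 else rk (w : α)

end

/-! ### The reduced kernel and the Chow function -/

section general

variable {α : Type*} [PartialOrder α] [LocallyFiniteOrder α]

lemma chi_isRoot {mu : α → α → ℤ} (hmu : IsMobius mu) (ρ : α → α → ℕ) {s t : α} (h : s < t) :
    (chi ρ mu s t).IsRoot 1 := by
  have := hmu.2.1 h
  simp only [chi, IsRoot.def, eval_finsetSum, eval_mul, eval_C, eval_pow, eval_X, one_pow, mul_one]
  exact this

/-- The division by `x - 1` defining `χ̄` is exact. -/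
lemma red_chi_mul {mu : α → α → ℤ} (hmu : IsMobius mu) (ρ : α → α → ℕ) {s t : α} (h : s < t) :
    (X - 1) * red (chi ρ mu) s t = chi ρ mu s t := by
  have := mul_divByMonic_eq_iff_isRoot.2 (chi_isRoot hmu ρ h)
  simpa [red, h.ne] using this

lemma chow_diag {κ H : α → α → ℤ[X]} (hH : IsChow κ H) (s : α) : H s s = 1 := by
  have := hH.right (le_refl s)
  simpa [conv, red, dlt] using this

/-- On an interval of rank one, `χ̄ = 1` and `μ = -1`. -/
lemma red_add_mu_of_cov {rk : α → ℕ} {mu : α → α → ℤ} (hmu : IsMobius mu) {s t : α}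
    (hst : s ⋖ t) (hrk : rk t = rk s + 1) :
    red (chi (rdiff rk) mu) s t + C (mu s t) = 0 := by
  have hI := hst.Icc_eq
  have hI' : Finset.Icc s t = {s, t} := by
    rw [← Finset.coe_inj]; simpa using hI
  have hm := hmu.2.1 hst.lt
  rw [hI', Finset.sum_pair hst.ne, hmu.1] at hm
  have hm' : mu s t = -1 := by omega
  have hr := red_chi_mul hmu (rdiff rk) hst.lt
  have hc : chi (rdiff rk) mu s t = X - 1 := by
    rw [chi, hI', Finset.sum_pair hst.ne, hmu.1, hm']
    simp [rdiff, hrk, sub_eq_add_neg]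
  have h1 : red (chi (rdiff rk) mu) s t = 1 := by
    have hne : (X - 1 : ℤ[X]) ≠ 0 := X_sub_C_ne_zero (1 : ℤ)
    apply mul_left_cancel₀ hne
    rw [hr, hc, mul_one]
  rw [h1, hm']; simp

/-- For `s < t`, `(ℋμ)_{st} = Σ_{s ≤ w < t} ℋ_{sw} (χ̄_{wt} + μ_{wt})`: the relation `ℋ·χ̄ = -δ`
replaces the term `ℋ_{st} μ_{tt} = ℋ_{st}`. -/
lemma Hmu_eq {κ H : α → α → ℤ[X]} (hH : IsChow κ H) {mu : α → α → ℤ} (hmu : IsMobius mu)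
    {s t : α} (h : s < t) :
    ∑ w ∈ Finset.Icc s t, H s w * C (mu w t)
      = ∑ w ∈ (Finset.Icc s t).erase t, H s w * (red κ w t + C (mu w t)) := by
  have hr := hH.right h.le
  have ht : t ∈ Finset.Icc s t := Finset.right_mem_Icc.2 h.le
  rw [conv, dlt, if_neg h.ne, ← Finset.sum_erase_add _ _ ht] at hr
  rw [← Finset.sum_erase_add _ _ ht]
  simp only [mul_add, Finset.sum_add_distrib]
  have h1 : red κ t t = -1 := by simp [red]
  rw [h1] at hr
  rw [hmu.1, C_1]
  linear_combination -hr

end general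

/-! ### The factorisation of the right augmented Chow function -/

section factor

variable {α : Type*} [PartialOrder α] [LocallyFiniteOrder α]

/-- `f^rev = μ·Z`. -/
lemma rev_eq_mu_Z {ρ : α → α → ℕ} {mu : α → α → ℤ} {f : α → α → ℤ[X]}
    (hf : IsRightKLS ρ (chi ρ mu) f) {s t : α} (h : s ≤ t) :
    rev ρ f s t = ∑ u ∈ Finset.Icc s t, C (mu s u) * zrevConv ρ f u t := by
  rw [hf.rev_eq h]
  simp only [conv, chi, zrevConv, Finset.sum_mul, Finset.mul_sum]
  rw [Finset.sum_comm' (t' := Finset.Icc s t) (s' := fun u => Finset.Icc u t)]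
  · simp only [mul_assoc]
  · intro v u
    simp only [Finset.mem_Icc]
    constructor
    · rintro ⟨⟨a, b⟩, c, d⟩; exact ⟨⟨d, b⟩, c, d.trans b⟩
    · rintro ⟨⟨a, b⟩, c, d⟩; exact ⟨⟨c.trans a, b⟩, c, a⟩

/-- `F = (ℋ·μ)·Z`. -/
lemma conv_rev_eq {ρ : α → α → ℕ} {mu : α → α → ℤ} {f : α → α → ℤ[X]}
    (hf : IsRightKLS ρ (chi ρ mu) f) (H : α → α → ℤ[X]) (s t : α) :
    conv H (rev ρ f) s t
      = ∑ u ∈ Finset.Icc s t, (∑ w ∈ Finset.Icc s u, H s w * C (mu w u)) * zrevConv ρ f u t := by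
  have h1 : conv H (rev ρ f) s t = ∑ w ∈ Finset.Icc s t, ∑ u ∈ Finset.Icc w t,
      H s w * (C (mu w u) * zrevConv ρ f u t) := by
    refine Finset.sum_congr rfl fun w hw => ?_
    rw [rev_eq_mu_Z hf (Finset.mem_Icc.1 hw).2, Finset.mul_sum]
  rw [h1, Finset.sum_comm' (t' := Finset.Icc s t) (s' := fun u => Finset.Icc s u)]
  · simp only [Finset.sum_mul, mul_assoc]
  · intro v u
    simp only [Finset.mem_Icc]
    constructor
    · rintro ⟨⟨a, b⟩, c, d⟩; exact ⟨⟨a, c⟩, a.trans c, d⟩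
    · rintro ⟨⟨a, b⟩, c, d⟩; exact ⟨⟨a, b.trans d⟩, b, d⟩

end factor

/-! ### Ranks in the truncation -/

section order

variable {α : Type*} [PartialOrder α] {rk : α → ℕ} {t : α}

lemma rk_lt_of_ne (hm : StrictMono rk) (u : Tr rk t) (hu : u.1 ≠ t) : rk u.1 < rk t - 1 := by
  have h1 := hm (lt_of_le_of_ne u.2.1 hu)
  have h2 := u.2.2
  omega

lemma ne_of_Tr_le {w u : Tr rk t} (h : w ≤ u) (hu : u.1 ≠ t) : w.1 ≠ t := by
  intro e
  apply hu
  have h' : w.1 ≤ u.1 := h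
  rw [e] at h'
  exact le_antisymm u.2.1 h'

lemma covBy_of_rk (hm : StrictMono rk) {w : α} (hw : w < t) (h : rk w = rk t - 1) : w ⋖ t := by
  refine ⟨hw, fun c h1 h2 => ?_⟩
  have := hm h1
  have := hm h2
  omega

end order

/-! ### Comparison of a poset with its truncation -/

section trunc

variable {α : Type*} [PartialOrder α] [Fintype α] [LocallyFiniteOrder α] {rk : α → ℕ} {t : α}

/-- Sums over an interval of the truncation are sums over the interval of `α` with the coatoms of
`[0̂,t]` left out. -/
lemma sum_Tr_Icc {M : Type*} [AddCommMonoid M] (s u : Tr rk t) (G : α → M) :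
    ∑ w ∈ Finset.Icc s u, G w.1
      = ∑ w ∈ (Finset.Icc s.1 u.1).filter (fun w => rk w ≠ rk t - 1), G w := by
  refine Finset.sum_bij (fun w _ => w.1) ?_ ?_ ?_ ?_
  · intro w hw
    have := Finset.mem_Icc.1 hw
    simp only [Finset.mem_filter, Finset.mem_Icc]
    exact ⟨⟨this.1, this.2⟩, w.2.2⟩
  · intro a _ b _ h; exact Subtype.ext h
  · intro w hw
    simp only [Finset.mem_filter, Finset.mem_Icc] at hw
    exact ⟨⟨w, hw.1.2.trans u.2.1, hw.2⟩, Finset.mem_Icc.2 ⟨hw.1.1, hw.1.2⟩, rfl⟩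
  · intros; rfl

/-- Intervals of the truncation with upper end below `t` are intervals of `α`. -/
lemma sum_Tr_Icc_of_ne {M : Type*} [AddCommMonoid M] (hm : StrictMono rk) (s u : Tr rk t)
    (hu : u.1 ≠ t) (G : α → M) :
    ∑ w ∈ Finset.Icc s u, G w.1 = ∑ w ∈ Finset.Icc s.1 u.1, G w := by
  rw [sum_Tr_Icc, Finset.filter_true_of_mem]
  intro w hw
  have h1 := hm.monotone (Finset.mem_Icc.1 hw).2
  have h2 := rk_lt_of_ne hm u hu
  omega

lemma mu_trunc (hm : StrictMono rk) {mu : α → α → ℤ} (hmu : IsMobius mu)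
    {mu' : Tr rk t → Tr rk t → ℤ} (hmu' : IsMobius mu') (s : Tr rk t) :
    ∀ u : Tr rk t, s ≤ u → u.1 ≠ t → mu' s u = mu s.1 u.1 := by
  intro u
  induction u using WellFoundedLT.induction with
  | ind u ih =>
    intro hsu hu
    rcases eq_or_lt_of_le hsu with rfl | hlt
    · rw [hmu.1, hmu'.1]
    have h1 := hmu'.2.1 hlt
    have h2 := hmu.2.1 (show s.1 < u.1 from hlt)
    rw [← sum_Tr_Icc_of_ne hm s u hu] at h2
    have h3 : ∑ w ∈ Finset.Icc s u, (mu' s w - mu s.1 w.1) = 0 := by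
      rw [Finset.sum_sub_distrib, h1, h2, sub_zero]
    rw [Finset.sum_eq_single_of_mem u (Finset.right_mem_Icc.2 hsu)] at h3
    · omega
    · intro w hw hne
      have hw' := Finset.mem_Icc.1 hw
      rw [ih w (lt_of_le_of_ne hw'.2 hne) hw'.1 (ne_of_Tr_le hw'.2 hu), sub_self]

lemma chi_trunc (hm : StrictMono rk) {mu : α → α → ℤ} (hmu : IsMobius mu)
    {mu' : Tr rk t → Tr rk t → ℤ} (hmu' : IsMobius mu') (s u : Tr rk t) (hu : u.1 ≠ t) :
    chi (rdiff (trk rk t)) mu' s u = chi (rdiff rk) mu s.1 u.1 := by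
  rw [chi, chi, ← sum_Tr_Icc_of_ne hm s u hu]
  refine Finset.sum_congr rfl fun w hw => ?_
  have hw' := Finset.mem_Icc.1 hw
  have hwt := ne_of_Tr_le hw'.2 hu
  rw [mu_trunc hm hmu hmu' s w hw'.1 hwt]
  simp [rdiff, trk, hwt, hu]

lemma red_trunc (hm : StrictMono rk) {mu : α → α → ℤ} (hmu : IsMobius mu)
    {mu' : Tr rk t → Tr rk t → ℤ} (hmu' : IsMobius mu') (s u : Tr rk t) (hu : u.1 ≠ t) :
    red (chi (rdiff (trk rk t)) mu') s u = red (chi (rdiff rk) mu) s.1 u.1 := by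
  simp only [red, chi_trunc hm hmu hmu' s u hu, Subtype.ext_iff]

lemma chow_trunc (hm : StrictMono rk) {mu : α → α → ℤ} (hmu : IsMobius mu)
    {mu' : Tr rk t → Tr rk t → ℤ} (hmu' : IsMobius mu')
    {H : α → α → ℤ[X]} (hH : IsChow (chi (rdiff rk) mu) H)
    {H' : Tr rk t → Tr rk t → ℤ[X]} (hH' : IsChow (chi (rdiff (trk rk t)) mu') H')
    (s : Tr rk t) :
    ∀ u : Tr rk t, s ≤ u → u.1 ≠ t → H' s u = H s.1 u.1 := by
  intro u
  induction u using WellFoundedLT.induction with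
  | ind u ih =>
    intro hsu hu
    rcases eq_or_lt_of_le hsu with rfl | hlt
    · rw [chow_diag hH, chow_diag hH']
    have h1 := hH'.right hlt.le
    have h2 := hH.right (show s.1 ≤ u.1 from hlt.le)
    rw [conv, dlt, if_neg hlt.ne] at h1
    rw [conv, dlt, if_neg (show s.1 < u.1 from hlt).ne, ← sum_Tr_Icc_of_ne hm s u hu] at h2
    have h3 : ∑ w ∈ Finset.Icc s u, (H' s w * red (chi (rdiff (trk rk t)) mu') w u
        - H s.1 w.1 * red (chi (rdiff rk) mu) w.1 u.1) = 0 := by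
      rw [Finset.sum_sub_distrib, h1, h2, sub_self]
    rw [Finset.sum_eq_single_of_mem u (Finset.right_mem_Icc.2 hsu)] at h3
    · simp only [red, if_true] at h3
      linear_combination -h3
    · intro w hw hne
      have hw' := Finset.mem_Icc.1 hw
      rw [ih w (lt_of_le_of_ne hw'.2 hne) hw'.1 (ne_of_Tr_le hw'.2 hu),
        red_trunc hm hmu hmu' w u hu, sub_self]

/-- `x χ'_{st} = χ_{st} + (x-1) μ_{st}` for `s < t` in the truncation. The ranks `ρ'_{wt}` drop by
one for `w < t`, and `μ'_{st}` is `μ_{st}` plus the sum of `μ_{sc}` over the removed coatoms `c`. -/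
lemma X_mul_chi_trunc (hm : StrictMono rk) (ht : 1 < rk t) {mu : α → α → ℤ} (hmu : IsMobius mu)
    {mu' : Tr rk t → Tr rk t → ℤ} (hmu' : IsMobius mu') (s T : Tr rk t) (hT : T.1 = t)
    (hs : s < T) :
    X * chi (rdiff (trk rk t)) mu' s T
      = chi (rdiff rk) mu s.1 t + (X - 1) * C (mu s.1 t) := by
  have hTm : T ∈ Finset.Icc s T := Finset.right_mem_Icc.2 hs.le
  have hst : s.1 < t := lt_of_lt_of_eq (show s.1 < T.1 from hs) hT
  have hne : ∀ w : Tr rk t, w ≠ T → w.1 ≠ t := fun w h e => h (Subtype.ext (e.trans hT.symm))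
  -- comparison of the two Möbius recursions
  have h1 := hmu'.2.1 hs
  have h2 := hmu.2.1 hst
  rw [← Finset.sum_filter_add_sum_filter_not _ (fun w => rk w ≠ rk t - 1)] at h2
  have e1 : ∑ w ∈ Finset.Icc s T, (mu' s w - mu s.1 w.1) = mu' s T - mu s.1 t := by
    rw [Finset.sum_eq_single_of_mem T hTm, hT]
    intro w hw hwT
    rw [mu_trunc hm hmu hmu' s w (Finset.mem_Icc.1 hw).1 (hne w hwT), sub_self]
  rw [Finset.sum_sub_distrib, h1, sum_Tr_Icc s T (fun w => mu s.1 w), hT] at e1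
  -- comparison of the two characteristic polynomials
  have e2 : ∑ w ∈ Finset.Icc s T, (X * (C (mu' s w) * X ^ rdiff (trk rk t) w T)
      - C (mu s.1 w.1) * X ^ rdiff rk w.1 t) = X * C (mu' s T) - C (mu s.1 t) := by
    rw [Finset.sum_eq_single_of_mem T hTm]
    · simp [rdiff, hT]
    · intro w hw hwT
      have hwt := hne w hwT
      have hr := rk_lt_of_ne hm w hwt
      rw [mu_trunc hm hmu hmu' s w (Finset.mem_Icc.1 hw).1 hwt]
      have : rdiff rk w.1 t = rdiff (trk rk t) w T + 1 := by
        simp only [rdiff, trk, hT, hwt, if_true, if_false]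
        omega
      rw [this]; ring
  rw [Finset.sum_sub_distrib, ← Finset.mul_sum,
    sum_Tr_Icc s T (fun w => C (mu s.1 w) * X ^ rdiff rk w t), hT] at e2
  have e3 : chi (rdiff rk) mu s.1 t
      = ∑ w ∈ (Finset.Icc s.1 t).filter (fun w => rk w ≠ rk t - 1), C (mu s.1 w) * X ^ rdiff rk w t
        + C (∑ w ∈ (Finset.Icc s.1 t).filter (fun w => ¬ rk w ≠ rk t - 1), mu s.1 w) * X := by
    rw [chi, ← Finset.sum_filter_add_sum_filter_not _ (fun w => rk w ≠ rk t - 1)]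
    congr 1
    rw [map_sum, Finset.sum_mul]
    refine Finset.sum_congr rfl fun w hw => ?_
    have h := (Finset.mem_filter.1 hw).2
    have : rdiff rk w t = 1 := by
      simp only [rdiff]; omega
    rw [this, pow_one]
  have e4 : ∑ w ∈ (Finset.Icc s.1 t).filter (fun w => ¬ rk w ≠ rk t - 1), mu s.1 w
      = mu' s T - mu s.1 t := by linarith
  rw [e4, C_sub] at e3
  rw [e3]
  have e5 : X * chi (rdiff (trk rk t)) mu' s T
      = X * ∑ w ∈ Finset.Icc s T, C (mu' s w) * X ^ rdiff (trk rk t) w T := rfl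
  rw [e5]
  linear_combination e2

lemma X_mul_red_trunc (hm : StrictMono rk) (ht : 1 < rk t) {mu : α → α → ℤ} (hmu : IsMobius mu)
    {mu' : Tr rk t → Tr rk t → ℤ} (hmu' : IsMobius mu') (s T : Tr rk t) (hT : T.1 = t)
    (hs : s < T) :
    X * red (chi (rdiff (trk rk t)) mu') s T
      = red (chi (rdiff rk) mu) s.1 t + C (mu s.1 t) := by
  have hst : s.1 < t := lt_of_lt_of_eq (show s.1 < T.1 from hs) hT
  have hne : (X - 1 : ℤ[X]) ≠ 0 := X_sub_C_ne_zero (1 : ℤ)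
  apply mul_left_cancel₀ hne
  have h1 := red_chi_mul hmu' (rdiff (trk rk t)) hs
  have h2 := red_chi_mul hmu (rdiff rk) hst
  have h3 := X_mul_chi_trunc hm ht hmu hmu' s T hT hs
  linear_combination X * h1 - h2 + h3

/-- `(ℋμ)_{bt} = x ℋ'_{bt}` for `b < t` in the truncation; the case `b = 0̂` gives
`(ℋμ)_{0̂t} = x ℋ_{trunc([0̂,t])}`. -/
lemma Hmu_eq_trunc (hm : StrictMono rk) (ht : 1 < rk t) {mu : α → α → ℤ} (hmu : IsMobius mu)
    {mu' : Tr rk t → Tr rk t → ℤ} (hmu' : IsMobius mu')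
    {H : α → α → ℤ[X]} (hH : IsChow (chi (rdiff rk) mu) H)
    {H' : Tr rk t → Tr rk t → ℤ[X]} (hH' : IsChow (chi (rdiff (trk rk t)) mu') H')
    (b T : Tr rk t) (hT : T.1 = t) (hb : b < T) :
    ∑ w ∈ Finset.Icc b.1 t, H b.1 w * C (mu w t) = X * H' b T := by
  have hbt : b.1 < t := lt_of_lt_of_eq (show b.1 < T.1 from hb) hT
  have hTm : T ∈ Finset.Icc b T := Finset.right_mem_Icc.2 hb.le
  have hr := hH'.right hb.le
  rw [conv, dlt, if_neg hb.ne, ← Finset.sum_erase_add _ _ hTm] at hr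
  have h1 : red (chi (rdiff (trk rk t)) mu') T T = -1 := by simp [red]
  rw [h1] at hr
  have h2 : X * H' b T = ∑ w ∈ (Finset.Icc b T).erase T,
      X * (H' b w * red (chi (rdiff (trk rk t)) mu') w T) := by
    rw [← Finset.mul_sum]
    linear_combination -X * hr
  -- the summands of `Hmu_eq`, extended by zero to `w = t`
  let G : α → ℤ[X] := fun w =>
    if w = t then 0 else H b.1 w * (red (chi (rdiff rk) mu) w t + C (mu w t))
  have h3 : X * H' b T = ∑ w ∈ Finset.Icc b T, G w.1 := by
    rw [h2, ← Finset.sum_erase_add _ _ hTm]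
    rw [show G T.1 = 0 by simp [G, hT], add_zero]
    refine Finset.sum_congr rfl fun w hw => ?_
    obtain ⟨hwT, hw⟩ := Finset.mem_erase.1 hw
    have hw' := Finset.mem_Icc.1 hw
    have hwt : w.1 ≠ t := fun e => hwT (Subtype.ext (e.trans hT.symm))
    simp only [G, if_neg hwt]
    rw [← X_mul_red_trunc hm ht hmu hmu' w T hT (lt_of_le_of_ne hw'.2 hwT),
      chow_trunc hm hmu hmu' hH hH' b w hw'.1 hwt]
    ring
  rw [h3, sum_Tr_Icc, hT, Hmu_eq hH hmu hbt]
  have h4 : ∑ w ∈ (Finset.Icc b.1 t).erase t, H b.1 w * (red (chi (rdiff rk) mu) w t + C (mu w t))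
      = ∑ w ∈ Finset.Icc b.1 t, G w := by
    rw [← Finset.sum_erase_add _ _ (Finset.right_mem_Icc.2 hbt.le)]
    rw [show G t = 0 by simp [G], add_zero]
    refine Finset.sum_congr rfl fun w hw => ?_
    simp [G, (Finset.mem_erase.1 hw).1]
  rw [h4]
  -- coatoms contribute zero
  symm
  refine Finset.sum_subset (Finset.filter_subset _ _) fun w hw hnw => ?_
  have hrk : rk w = rk t - 1 := by
    by_contra hc
    exact hnw (Finset.mem_filter.2 ⟨hw, hc⟩)
  by_cases hwt : w = t
  · simp [G, hwt]
  have hlt := lt_of_le_of_ne (Finset.mem_Icc.1 hw).2 hwt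
  simp only [G, if_neg hwt]
  rw [red_add_mu_of_cov hmu (covBy_of_rk hm hlt hrk) (by omega), mul_zero]

/-- `(ℋμ)_{st} = 0` on an interval of rank one. -/
lemma Hmu_eq_zero (hm : StrictMono rk) {mu : α → α → ℤ} (hmu : IsMobius mu)
    {H : α → α → ℤ[X]} (hH : IsChow (chi (rdiff rk) mu) H) {s : α} (hst : s < t)
    (hrk : rk t = rk s + 1) :
    ∑ w ∈ Finset.Icc s t, H s w * C (mu w t) = 0 := by
  rw [Hmu_eq hH hmu hst]
  refine Finset.sum_eq_zero fun w hw => ?_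
  obtain ⟨hwt, hw⟩ := Finset.mem_erase.1 hw
  obtain ⟨h1, h2⟩ := Finset.mem_Icc.1 hw
  have hlt := lt_of_le_of_ne h2 hwt
  have := hm hlt
  have := hm.monotone h1
  rw [red_add_mu_of_cov hmu (covBy_of_rk hm hlt (by omega)) (by omega), mul_zero]

end trunc

/-- Proposition 4.10: for a finite graded bounded poset `P`, with `f` the right KLS function of
the kernel `χ`, `Z = ζ^rev·f` the `Z`-function, and `F = ℋ·f^rev` the right augmented Chow
function, one has `F_P(x) = Z_P(x) + x Σ_{t : ρ(t) > 1} ℋ_{trunc([0̂,t])}(x) · Z_{t1̂}(x)`.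
Here `HT t` is the `χ`-Chow polynomial of the truncation `trunc([0̂,t])`, characterized by the
existence of the Möbius and Chow functions of that truncated poset. -/
theorem right_augmented_larson_recursion {α : Type*}
    [PartialOrder α] [BoundedOrder α] [Fintype α] [LocallyFiniteOrder α]
    (rk : α → ℕ) (hg : GradedData rk)
    (mu : α → α → ℤ) (hmu : IsMobius mu)
    (H : α → α → Polynomial ℤ) (hH : IsChow (chi (rdiff rk) mu) H)
    (f : α → α → Polynomial ℤ) (hf : IsRightKLS (rdiff rk) (chi (rdiff rk) mu) f)
    (HT : α → Polynomial ℤ)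
    (hHT : ∀ (t : α) (ht : 1 < rk t),
      ∃ (mu' : Tr rk t → Tr rk t → ℤ) (H' : Tr rk t → Tr rk t → Polynomial ℤ) (b : Tr rk t),
        IsBot b ∧ IsMobius mu' ∧ IsChow (chi (rdiff (trk rk t)) mu') H' ∧
        HT t = H' b ⟨t, le_refl t, by omega⟩) :
    conv H (rev (rdiff rk) f) ⊥ ⊤
      = zrevConv (rdiff rk) f ⊥ ⊤
        + X * ∑ t ∈ Finset.univ.filter (fun t : α => 1 < rk t),
            HT t * zrevConv (rdiff rk) f t ⊤ := by
  rw [conv_rev_eq hf, Finset.Icc_bot_top]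
  rw [← Finset.add_sum_erase _ _ (Finset.mem_univ (⊥ : α))]
  congr 1
  · simp [chow_diag hH, hmu.1]
  rw [Finset.mul_sum]
  have hsub : Finset.univ.filter (fun t : α => 1 < rk t) ⊆ Finset.univ.erase ⊥ := by
    intro t ht
    have h1 := (Finset.mem_filter.1 ht).2
    refine Finset.mem_erase.2 ⟨?_, Finset.mem_univ _⟩
    rintro rfl
    rw [hg.bot] at h1
    omega
  rw [← Finset.sum_subset hsub]
  · refine Finset.sum_congr rfl fun t ht => ?_
    have ht1 := (Finset.mem_filter.1 ht).2
    obtain ⟨mu', H', b, hb, hmu', hH', hHt⟩ := hHT t ht1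
    have hb0 : b.1 = ⊥ := by
      have : b ≤ (⟨⊥, bot_le, by rw [hg.bot]; omega⟩ : Tr rk t) := hb _
      exact le_bot_iff.1 this
    have hne : b ≠ (⟨t, le_refl t, by omega⟩ : Tr rk t) := by
      intro e
      have e' : b.1 = t := congrArg Subtype.val e
      rw [← e', hb0, hg.bot] at ht1
      omega
    have key := Hmu_eq_trunc hg.mono ht1 hmu hmu' hH hH' b ⟨t, le_refl t, by omega⟩ rfl
      (lt_of_le_of_ne (hb _) hne)
    rw [hb0] at key
    rw [key, hHt, mul_assoc]
  · intro t ht hnt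
    have hlt : ⊥ < t := bot_lt_iff_ne_bot.2 (Finset.mem_erase.1 ht).1
    have h1 : ¬ 1 < rk t := fun h => hnt (Finset.mem_filter.2 ⟨Finset.mem_univ _, h⟩)
    have h2 := hg.mono hlt
    have h3 := hg.bot
    rw [Hmu_eq_zero hg.mono hmu hH hlt (by omega), zero_mul]
end
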